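/- arXiv:2012.13515 — 3 statements merged into one kernel-verified Lean document; each statement's English description precedes it below -/
import Mathlib

section
/- Let E ⊆ ℝ² be compact, ε > 0, and x ∈ ∂E_ε. Then the following are equivalent: (a) there exists a sequence (V_n) of pairwise disjoint connected components of E_ε^c with Hausdorff distance dist_H({x}, V_n) → 0 as n → ∞; (b) there exists a sequence (x_n) of singularities on ∂E_ε with x_n ≠ x, x_n → x, and ⟨(y_n^{(1)} − x_n)/ε, (y_n^{(2)} − x_n)/ε⟩ → −1, where Π_ext(x_n) = {y_n^{(1)}, y_n^{(2)}}. -/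
open Metric Set Filter Topology RealInnerProductSpace

noncomputable section

/-- The Euclidean plane. -/
abbrev Plane := EuclideanSpace ℝ (Fin 2)

/-- The closed ε-neighbourhood of a set `E ⊆ ℝ²`: the closure of the union of open
ε-balls centred at points of `E`. -/
def eNbhd (E : Set Plane) (ε : ℝ) : Set Plane :=
  closure (⋃ y ∈ E, ball y ε)

/-- The set of contributors of a boundary point `x ∈ ∂E_ε`: points `y ∈ ∂E` with
`‖y - x‖ = ε`. -/
def contributors (E : Set Plane) (ε : ℝ) (x : Plane) : Set Plane :=
  {y ∈ frontier E | ‖y - x‖ = ε}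

/-- The set of outward directions from `E_ε` at `x`. -/
def outwardDirs (E : Set Plane) (ε : ℝ) (x : Plane) : Set Plane :=
  {ξ | ‖ξ‖ = 1 ∧ ∃ u : ℕ → Plane, (∀ n, u n ∉ eNbhd E ε) ∧
    Tendsto u atTop (nhds x) ∧
    Tendsto (fun n => (‖u n - x‖)⁻¹ • (u n - x)) atTop (nhds ξ)}

/-- The set of extremal outward directions at `x`: outward directions perpendicular to
`y - x` for some contributor `y`. -/
def extOutward (E : Set Plane) (ε : ℝ) (x : Plane) : Set Plane :=
  {ξ ∈ outwardDirs E ε x | ∃ y ∈ contributors E ε x, ⟪y - x, ξ⟫ = 0}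

/-- The set of extremal contributors at `x`: contributors perpendicular to some
outward direction. -/
def extContrib (E : Set Plane) (ε : ℝ) (x : Plane) : Set Plane :=
  {y ∈ contributors E ε x | ∃ ξ ∈ outwardDirs E ε x, ⟪y - x, ξ⟫ = 0}

/-- The set of extremal pairs at `x`. -/
def extPairs (E : Set Plane) (ε : ℝ) (x : Plane) : Set (Plane × Plane) :=
  {p | p.1 ∈ outwardDirs E ε x ∧ p.2 ∈ contributors E ε x ∧ ⟪p.2 - x, p.1⟫ = 0}

/-- The set `Unp(E)` of boundary points of `E_ε` with a unique contributor. -/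
def unp (E : Set Plane) (ε : ℝ) : Set Plane :=
  {x ∈ frontier (eNbhd E ε) | ∃ y, contributors E ε x = {y}}

/-- A boundary point `x ∈ ∂E_ε` is smooth if `x ∈ Unp(E)` and a whole neighbourhood of
`x` on the boundary consists of points of `Unp(E)`. -/
def IsSmoothPt (E : Set Plane) (ε : ℝ) (x : Plane) : Prop :=
  x ∈ unp E ε ∧ ∃ r > 0, frontier (eNbhd E ε) ∩ ball x r ⊆ unp E ε

/-- A singularity: a non-smooth boundary point of `E_ε`. -/
def IsSingularity (E : Set Plane) (ε : ℝ) (x : Plane) : Prop :=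
  x ∈ frontier (eNbhd E ε) ∧ ¬ IsSmoothPt E ε x

/-- The open half-ball of radius `r` at `x` in direction `v`. -/
def halfBall (x v : Plane) (r : ℝ) : Set Plane :=
  {z ∈ ball x r | 0 < ⟪z - x, v⟫}

/-- `V` is a connected component of the complement of `E_ε`. -/
def IsCompOfCompl (E : Set Plane) (ε : ℝ) (V : Set Plane) : Prop :=
  ∃ z, z ∉ eNbhd E ε ∧ V = connectedComponentIn (eNbhd E ε)ᶜ z

/-- The closed geodesic arc-segment between `v, w ∈ S¹`. -/
def arcSeg (v w : Plane) : Set Plane :=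
  {u | ‖u‖ = 1 ∧ ∃ a b : ℝ, 0 ≤ a ∧ 0 ≤ b ∧ u = a • v + b • w}

/-- The open geodesic arc-segment between `v, w ∈ S¹`. -/
def openArc (v w : Plane) : Set Plane :=
  arcSeg v w \ {v, w}

/-- A chain sequence for `x`: a sequence of singularities converging to `x` whose
extremal contributors become increasingly opposed. -/
def IsChainSeq (E : Set Plane) (ε : ℝ) (x : Plane) (u : ℕ → Plane) : Prop :=
  (∀ n, IsSingularity E ε (u n)) ∧ (∀ n, u n ≠ x) ∧ Tendsto u atTop (nhds x) ∧
  ∃ y1 y2 : ℕ → Plane, (∀ n, extContrib E ε (u n) = {y1 n, y2 n}) ∧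
    Tendsto (fun n => ⟪ε⁻¹ • (y1 n - u n), ε⁻¹ • (y2 n - u n)⟫) atTop (nhds (-1))

/-- Type S1: wedge. -/
def IsWedge (E : Set Plane) (ε : ℝ) (x : Plane) : Prop :=
  IsSingularity E ε x ∧
  ∃ ξ₁ ξ₂, extOutward E ε x = {ξ₁, ξ₂} ∧ ξ₁ ≠ ξ₂ ∧ ξ₁ ≠ -ξ₂

/-- Type S2: one-sided sharp singularity. -/
def IsSharp (E : Set Plane) (ε : ℝ) (x : Plane) : Prop :=
  IsSingularity E ε x ∧ (∃ ξ, extOutward E ε x = {ξ}) ∧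
  ∃ δ > 0, IsConnected (ball x δ ∩ (eNbhd E ε)ᶜ)

/-- Type S3: sharp-sharp singularity. -/
def IsSharpSharp (E : Set Plane) (ε : ℝ) (x : Plane) : Prop :=
  IsSingularity E ε x ∧ ∃ ξ, extOutward E ε x = {ξ, -ξ} ∧
    ∀ η ∈ ({ξ, -ξ} : Set Plane), ∃ δ > 0, IsConnected (halfBall x η δ ∩ (eNbhd E ε)ᶜ)

/-- Type S4: one-sided shallow singularity. -/
def IsShallow (E : Set Plane) (ε : ℝ) (x : Plane) : Prop :=
  IsSingularity E ε x ∧ x ∈ unp E ε ∧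
  ∃ ξ₁ ξ₂, extOutward E ε x = {ξ₁, ξ₂} ∧
    (∃ δ > 0, halfBall x ξ₁ δ ∩ frontier (eNbhd E ε) ⊆ unp E ε) ∧
    (∀ δ > 0, ¬ (halfBall x ξ₂ δ ∩ frontier (eNbhd E ε) ⊆ unp E ε))

/-- Type S5: shallow-shallow singularity. -/
def IsShallowShallow (E : Set Plane) (ε : ℝ) (x : Plane) : Prop :=
  IsSingularity E ε x ∧ x ∈ unp E ε ∧
  ∃ ξ₁ ξ₂, extOutward E ε x = {ξ₁, ξ₂} ∧
    ∀ η ∈ ({ξ₁, ξ₂} : Set Plane), ∀ δ > 0,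
      ¬ (halfBall x η δ ∩ frontier (eNbhd E ε) ⊆ unp E ε)

/-- Type S6: one-sided chain singularity. -/
def IsChainSing (E : Set Plane) (ε : ℝ) (x : Plane) : Prop :=
  IsSingularity E ε x ∧ (∃ ξ, extOutward E ε x = {ξ}) ∧
  ∃ u, IsChainSeq E ε x u

/-- Type S7: chain-chain singularity. -/
def IsChainChain (E : Set Plane) (ε : ℝ) (x : Plane) : Prop :=
  IsSingularity E ε x ∧ ∃ ξ, extOutward E ε x = {ξ, -ξ} ∧
    ∀ η ∈ ({ξ, -ξ} : Set Plane), ∃ δ > 0, ∃ u,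
      IsChainSeq E ε x u ∧ ∀ n, u n ∈ halfBall x η δ

/-- Type S8: sharp-chain singularity. -/
def IsSharpChain (E : Set Plane) (ε : ℝ) (x : Plane) : Prop :=
  IsSingularity E ε x ∧ ∃ ξ, extOutward E ε x = {ξ, -ξ} ∧
    (∃ δ > 0, IsConnected (halfBall x ξ δ ∩ (eNbhd E ε)ᶜ)) ∧
    (∃ δ > 0, ∃ u, IsChainSeq E ε x u ∧ ∀ n, u n ∈ halfBall x (-ξ) δ)

/-!
Let `V` be a small component of the complement close to `x`, and let `z` be a point of its closure
farthest from `x`. Then `z` lies on the boundary of `E_ε`, and since `z` is close to `x`, the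
contributors of `z` have directions almost in the half-plane `⟪·, z - x⟫ ≤ 0`. If the two extremal
contributors were not almost opposite, one could move `z` inside the closure of `V` away from `x`.

Conversely, if the extremal contributors along a sequence of singularities tending to `x` become
opposite, then in the limit `x` has two opposite contributors `x ± ε f`, so that near `x` the
complement is confined to a thin double cusp around the line through `x` orthogonal to `f`. At each
singularity, the disks about its two extremal contributors pinch this cusp off. Infinitely many
pinches lie on one side of `x`; a point of the complement close to a pinch belongs to a component
caught between the two neighbouring pinches, and these components shrink to `x`.
-/

section Geometry

variable {V : Type*} [NormedAddCommGroup V] [InnerProductSpace ℝ V]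

theorem exists_orthonormalBasis_apply_eq {ι : Type*} [Fintype ι]
    (hcard : Module.finrank ℝ V = Fintype.card ι) (i : ι) {ξ : V} (hξ : ‖ξ‖ = 1) :
    ∃ b : OrthonormalBasis ι ℝ V, b i = ξ := by
  have : FiniteDimensional ℝ V :=
    Module.finite_of_finrank_pos (hcard ▸ Fintype.card_pos_iff.2 ⟨i⟩)
  have hon : Orthonormal ℝ (({i} : Set ι).domRestrict fun _ => ξ) :=
    ⟨fun _ => hξ, fun j k hjk => (hjk (Subsingleton.elim j k)).elim⟩
  obtain ⟨b, hb⟩ := hon.exists_orthonormalBasis_extension_of_card_eq hcard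
  exact ⟨b, hb i rfl⟩

theorem orthonormalBasis_eq_inner_smul_add (b : OrthonormalBasis (Fin 2) ℝ V) (v : V) :
    v = ⟪b 0, v⟫ • b 0 + ⟪b 1, v⟫ • b 1 := by
  simpa [Fin.sum_univ_two] using (b.sum_repr' v).symm

theorem orthonormalBasis_inner_sq_add_inner_sq (b : OrthonormalBasis (Fin 2) ℝ V) (v : V) :
    ⟪b 0, v⟫ ^ 2 + ⟪b 1, v⟫ ^ 2 = ‖v‖ ^ 2 := by
  simpa [Fin.sum_univ_two] using b.sum_sq_norm_inner_right v

section FinrankEqTwo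

variable [Fact (Module.finrank ℝ V = 2)]

theorem exists_orthonormalBasis_fin_two_apply_eq (i : Fin 2) {ξ : V} (hξ : ‖ξ‖ = 1) :
    ∃ b : OrthonormalBasis (Fin 2) ℝ V, b i = ξ :=
  exists_orthonormalBasis_apply_eq (Fact.out : Module.finrank ℝ V = 2) i hξ

theorem exists_norm_eq_one_inner_eq_zero_inner_nonpos {v : V} (hv : ‖v‖ = 1) (w : V) :
    ∃ ξ : V, ‖ξ‖ = 1 ∧ ⟪v, ξ⟫ = 0 ∧ ⟪w, ξ⟫ ≤ 0 := by
  obtain ⟨b, rfl⟩ := exists_orthonormalBasis_fin_two_apply_eq 0 hv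
  have horth : ⟪b 0, b 1⟫ = 0 := b.inner_eq_zero (by decide)
  rcases le_total ⟪w, b 1⟫ 0 with h | h
  · exact ⟨b 1, b.norm_eq_one 1, horth, h⟩
  · exact ⟨-b 1, by simp, by simp [horth], by simpa using h⟩

theorem eq_or_eq_neg_of_inner_eq_zero {v w ξ : V} (hv : ‖v‖ = 1) (hw : ‖w‖ = 1)
    (hξ : ‖ξ‖ = 1) (hvξ : ⟪v, ξ⟫ = 0) (hwξ : ⟪w, ξ⟫ = 0) : v = w ∨ v = -w := by
  obtain ⟨b, rfl⟩ := exists_orthonormalBasis_fin_two_apply_eq 0 hξ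
  rw [real_inner_comm] at hvξ hwξ
  have hv' := orthonormalBasis_inner_sq_add_inner_sq b v
  have hw' := orthonormalBasis_inner_sq_add_inner_sq b w
  rw [orthonormalBasis_eq_inner_smul_add b v, orthonormalBasis_eq_inner_smul_add b w, hvξ, hwξ]
  rw [hvξ, hv] at hv'
  rw [hwξ, hw] at hw'
  rcases sq_eq_sq_iff_eq_or_eq_neg.1 (show ⟪b 1, v⟫ ^ 2 = ⟪b 1, w⟫ ^ 2 by linarith) with h | h
  · exact .inl (by rw [h])
  · exact .inr (by rw [h]; simp)

end FinrankEqTwo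

theorem eq_sin_smul_sub_cos_smul (b : OrthonormalBasis (Fin 2) ℝ V) {w : V} (hw : ‖w‖ = 1)
    (hneg : ⟪b 0, w⟫ ≤ 0) :
    w = Real.sin (Real.arcsin ⟪b 1, w⟫) • b 1 - Real.cos (Real.arcsin ⟪b 1, w⟫) • b 0 := by
  have hsq := orthonormalBasis_inner_sq_add_inner_sq b w
  rw [hw] at hsq
  have hle : |⟪b 1, w⟫| ≤ 1 := by simpa [hw] using abs_real_inner_le_norm (b 1) w
  have hcos : Real.cos (Real.arcsin ⟪b 1, w⟫) = -⟪b 0, w⟫ := by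
    rw [Real.cos_arcsin, Real.sqrt_eq_iff_mul_self_eq (by nlinarith) (by linarith)]
    linarith
  rw [Real.sin_arcsin (abs_le.1 hle).1 (abs_le.1 hle).2, hcos, neg_smul, sub_neg_eq_add, add_comm]
  exact orthonormalBasis_eq_inner_smul_add b w

theorem inner_sub_nonpos_of_isMaxOn_norm_sub {S : Set V} {x z v : V}
    (hmax : IsMaxOn (fun u => ‖u - x‖) S z) (hv : ∀ᶠ t : ℝ in 𝓝[>] 0, z + t • v ∈ S) :
    ⟪z - x, v⟫ ≤ 0 := by
  have hbound : ∀ᶠ t : ℝ in 𝓝[>] 0, 2 * ⟪z - x, v⟫ + t * ‖v‖ ^ 2 ≤ 0 := by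
    filter_upwards [hv, self_mem_nhdsWithin] with t ht htpos
    have hle : ‖(z - x) + t • v‖ ^ 2 ≤ ‖z - x‖ ^ 2 := by
      rw [← add_sub_right_comm]
      gcongr
      exact hmax ht
    rw [norm_add_sq_real, inner_smul_right, norm_smul, mul_pow, Real.norm_eq_abs, sq_abs] at hle
    have htpos : 0 < t := htpos
    refine nonpos_of_mul_nonpos_right (b := _) (a := t) ?_ htpos
    linarith
  have hlim : Tendsto (fun t : ℝ => 2 * ⟪z - x, v⟫ + t * ‖v‖ ^ 2) (𝓝[>] 0)
      (𝓝 (2 * ⟪z - x, v⟫ + 0 * ‖v‖ ^ 2)) :=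
    ((continuous_const.add (continuous_id.mul continuous_const)).tendsto 0).mono_left
      nhdsWithin_le_nhds
  linarith [le_of_tendsto hlim hbound]

end Geometry

section Arc

instance : Fact (Module.finrank ℝ Plane = 2) := ⟨finrank_euclideanSpace_fin⟩

theorem inner_nonpos_of_mem_arcSeg {w₁ w₂ w v : Plane} (hw : w ∈ arcSeg w₁ w₂)
    (h₁ : ⟪w₁, v⟫ ≤ 0) (h₂ : ⟪w₂, v⟫ ≤ 0) : ⟪w, v⟫ ≤ 0 := by
  obtain ⟨-, a, b, ha, hb, rfl⟩ := hw
  rw [inner_add_left, real_inner_smul_left, real_inner_smul_left]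
  exact add_nonpos (mul_nonpos_of_nonneg_of_nonpos ha h₁) (mul_nonpos_of_nonneg_of_nonpos hb h₂)

theorem inner_neg_of_mem_arcSeg {w₁ w₂ w v : Plane} (hw : w ∈ arcSeg w₁ w₂)
    (h₁ : ⟪w₁, v⟫ < 0) (h₂ : ⟪w₂, v⟫ < 0) : ⟪w, v⟫ < 0 := by
  obtain ⟨hnorm, a, b, ha, hb, rfl⟩ := hw
  rw [inner_add_left, real_inner_smul_left, real_inner_smul_left]
  rcases ha.eq_or_lt with rfl | ha
  · have hb : 0 < b := hb.lt_of_ne fun h => by simp [← h] at hnorm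
    linarith [mul_neg_of_pos_of_neg hb h₂]
  · exact add_neg_of_neg_of_nonpos (mul_neg_of_pos_of_neg ha h₁)
      (mul_nonpos_of_nonneg_of_nonpos hb h₂.le)

theorem exists_forall_mem_arcSeg_inner_neg {w₁ w₂ : Plane} (hw₁ : ‖w₁‖ = 1) (hw₂ : ‖w₂‖ = 1)
    (hne : w₁ ≠ -w₂) : ∃ η : Plane, ∀ w ∈ arcSeg w₁ w₂, ⟪w, η⟫ < 0 := by
  have hge : -1 ≤ ⟪w₁, w₂⟫ := neg_one_le_real_inner_of_norm_eq_one hw₁ hw₂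
  have hinner : -1 < ⟪w₁, w₂⟫ := hge.lt_of_ne fun h =>
    hne ((inner_eq_neg_one_iff_of_norm_eq_one hw₁ hw₂).1 h.symm)
  refine ⟨-(w₁ + w₂), fun w hw => inner_neg_of_mem_arcSeg hw ?_ ?_⟩
  · rw [inner_neg_right, inner_add_right, real_inner_self_eq_norm_sq, hw₁]
    linarith
  · rw [inner_neg_right, inner_add_right, real_inner_self_eq_norm_sq, hw₂, real_inner_comm]
    linarith

theorem norm_sin_smul_sub_cos_smul (b : OrthonormalBasis (Fin 2) ℝ Plane) (θ : ℝ) :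
    ‖Real.sin θ • b 1 - Real.cos θ • b 0‖ = 1 := by
  have h : ‖Real.sin θ • b 1 - Real.cos θ • b 0‖ ^ 2 = 1 := by
    rw [← orthonormalBasis_inner_sq_add_inner_sq b]
    simp [inner_sub_right, inner_smul_right, b.inner_eq_zero]
  exact (pow_eq_one_iff_of_nonneg (norm_nonneg _) two_ne_zero).1 h

theorem sin_smul_sub_cos_smul_mem_arcSeg (b : OrthonormalBasis (Fin 2) ℝ Plane) {α β θ : ℝ}
    (hαθ : α ≤ θ) (hθβ : θ ≤ β) (hβα : β - α < Real.pi) :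
    Real.sin θ • b 1 - Real.cos θ • b 0 ∈
      arcSeg (Real.sin β • b 1 - Real.cos β • b 0) (Real.sin α • b 1 - Real.cos α • b 0) := by
  refine ⟨norm_sin_smul_sub_cos_smul b θ, ?_⟩
  rcases (hαθ.trans hθβ).eq_or_lt with rfl | hαβ
  · obtain rfl : α = θ := le_antisymm hαθ hθβ
    exact ⟨1, 0, zero_le_one, le_rfl, by simp⟩
  have hpos : 0 < Real.sin (β - α) := Real.sin_pos_of_pos_of_lt_pi (by linarith) hβα
  refine ⟨Real.sin (θ - α) / Real.sin (β - α), Real.sin (β - θ) / Real.sin (β - α),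
    div_nonneg (Real.sin_nonneg_of_nonneg_of_le_pi (by linarith) (by linarith)) hpos.le,
    div_nonneg (Real.sin_nonneg_of_nonneg_of_le_pi (by linarith) (by linarith)) hpos.le,
    smul_right_injective _ hpos.ne' ?_⟩
  simp only [smul_add, smul_smul, mul_div_cancel₀ _ hpos.ne']
  simp only [Real.sin_sub]
  module

theorem exists_eq_neg_or_subset_arcSeg {W : Set Plane} {ξ : Plane} (hW : IsCompact W)
    (hne : W.Nonempty) (hunit : ∀ w ∈ W, ‖w‖ = 1) (hξ : ‖ξ‖ = 1) (hneg : ∀ w ∈ W, ⟪w, ξ⟫ ≤ 0) :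
    ∃ w₁ ∈ W, ∃ w₂ ∈ W, w₁ = -w₂ ∨ W ⊆ arcSeg w₁ w₂ := by
  obtain ⟨b, rfl⟩ := exists_orthonormalBasis_fin_two_apply_eq 0 hξ
  let θ : Plane → ℝ := fun w => Real.arcsin ⟪b 1, w⟫
  have hθ : Continuous θ := by fun_prop
  have hpolar : ∀ w ∈ W, w = Real.sin (θ w) • b 1 - Real.cos (θ w) • b 0 := fun w hw =>
    eq_sin_smul_sub_cos_smul b (hunit w hw) (by simpa [real_inner_comm] using hneg w hw)
  obtain ⟨w₁, hw₁, hmax⟩ := hW.exists_isMaxOn hne hθ.continuousOn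
  obtain ⟨w₂, hw₂, hmin⟩ := hW.exists_isMinOn hne hθ.continuousOn
  refine ⟨w₁, hw₁, w₂, hw₂, ?_⟩
  have hle : θ w₁ ≤ Real.pi / 2 := Real.arcsin_le_pi_div_two _
  have hge : -(Real.pi / 2) ≤ θ w₂ := Real.neg_pi_div_two_le_arcsin _
  rcases lt_or_ge (θ w₁ - θ w₂) Real.pi with hlt | hpi
  · refine .inr fun w hw => ?_
    rw [hpolar w hw, hpolar w₁ hw₁, hpolar w₂ hw₂]
    exact sin_smul_sub_cos_smul_mem_arcSeg b (hmin hw) (hmax hw) hlt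
  · have h₁ : θ w₁ = Real.pi / 2 := by linarith
    have h₂ : θ w₂ = -(Real.pi / 2) := by linarith
    left
    rw [hpolar w₁ hw₁, hpolar w₂ hw₂, h₁, h₂]
    simp

end Arc

/-- The contributors of `z`, recorded as unit directions: `w` stands for the point `z + ε • w` of
`E` at distance `ε` from `z`. Membership in `∂E` is not required, as it is automatic when `z` lies
on `∂E_ε`. -/
def contributorDirs (E : Set Plane) (ε : ℝ) (z : Plane) : Set Plane :=
  {w | ‖w‖ = 1 ∧ z + ε • w ∈ E}

section Neighbourhood

variable {E : Set Plane} {ε : ℝ} {x z v w : Plane}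

theorem mem_eNbhd_iff (hE : IsClosed E) (hε : 0 < ε) :
    z ∈ eNbhd E ε ↔ ∃ y ∈ E, ‖y - z‖ ≤ ε := by
  rw [eNbhd, ← thickening_eq_biUnion_ball, closure_thickening hε,
    hE.cthickening_eq_biUnion_closedBall hε.le]
  simp [dist_eq_norm, norm_sub_rev]

theorem mem_eNbhd_iff_exists_smul (hE : IsClosed E) (hε : 0 < ε) :
    z ∈ eNbhd E ε ↔ ∃ w, ‖w‖ ≤ 1 ∧ z + ε • w ∈ E := by
  rw [mem_eNbhd_iff hE hε]
  constructor
  · rintro ⟨y, hy, hyz⟩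
    refine ⟨ε⁻¹ • (y - z), ?_, by simpa [smul_smul, hε.ne'] using hy⟩
    rwa [norm_smul, norm_inv, Real.norm_of_nonneg hε.le, inv_mul_le_one₀ hε]
  · rintro ⟨w, hw, hwE⟩
    refine ⟨_, hwE, ?_⟩
    rw [add_sub_cancel_left, norm_smul, Real.norm_of_nonneg hε.le]
    exact mul_le_of_le_one_right hε.le hw

theorem mem_frontier_eNbhd_iff :
    z ∈ frontier (eNbhd E ε) ↔ z ∈ eNbhd E ε ∧ z ∈ closure (eNbhd E ε)ᶜ := by
  rw [frontier_eq_closure_inter_closure, mem_inter_iff, eNbhd, closure_closure]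

theorem le_norm_sub_of_mem_closure_compl (hz : z ∈ closure (eNbhd E ε)ᶜ) {y : Plane}
    (hy : y ∈ E) : ε ≤ ‖y - z‖ := by
  by_contra! hlt
  rw [closure_compl] at hz
  refine hz (interior_maximal ((subset_biUnion_of_mem hy).trans subset_closure) isOpen_ball ?_)
  rwa [mem_ball, dist_eq_norm, norm_sub_rev]

theorem mem_contributorDirs_of_mem_closure_compl (hε : 0 < ε) (hz : z ∈ closure (eNbhd E ε)ᶜ)
    (hw : ‖w‖ ≤ 1) (hwE : z + ε • w ∈ E) : w ∈ contributorDirs E ε z := by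
  have hle := le_norm_sub_of_mem_closure_compl hz hwE
  rw [add_sub_cancel_left, norm_smul, Real.norm_of_nonneg hε.le, le_mul_iff_one_le_right hε] at hle
  exact ⟨hw.antisymm hle, hwE⟩

theorem contributorDirs_nonempty (hE : IsClosed E) (hε : 0 < ε)
    (hz : z ∈ frontier (eNbhd E ε)) : (contributorDirs E ε z).Nonempty := by
  rw [mem_frontier_eNbhd_iff, mem_eNbhd_iff_exists_smul hE hε] at hz
  obtain ⟨⟨w, hw, hwE⟩, hcl⟩ := hz
  exact ⟨w, mem_contributorDirs_of_mem_closure_compl hε hcl hw hwE⟩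

theorem isCompact_contributorDirs (hE : IsClosed E) : IsCompact (contributorDirs E ε z) := by
  have h : contributorDirs E ε z = sphere 0 1 ∩ (fun w => z + ε • w) ⁻¹' E := by
    ext w
    simp [contributorDirs]
  rw [h]
  exact (isCompact_sphere 0 1).inter_right (hE.preimage (by fun_prop))

theorem contributors_eq_image_contributorDirs (hE : IsClosed E) (hε : 0 < ε)
    (hz : z ∈ frontier (eNbhd E ε)) :
    contributors E ε z = (fun w => z + ε • w) '' contributorDirs E ε z := by
  ext y
  constructor
  · rintro ⟨hy, hyz⟩
    refine ⟨ε⁻¹ • (y - z), ⟨?_, ?_⟩, ?_⟩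
    · rw [norm_smul, norm_inv, Real.norm_of_nonneg hε.le, hyz, inv_mul_cancel₀ hε.ne']
    · simpa [smul_smul, hε.ne'] using hE.frontier_subset hy
    · simp [smul_smul, hε.ne']
  · rintro ⟨w, ⟨hw, hwE⟩, rfl⟩
    have hnorm : ∀ u : Plane, ‖(u + ε • w) - u‖ = ε := fun u => by
      rw [add_sub_cancel_left, norm_smul, hw, mul_one, Real.norm_of_nonneg hε.le]
    refine ⟨⟨subset_closure hwE, fun hint => ?_⟩, hnorm z⟩
    have hnhds : ∀ᶠ u in 𝓝 z, u + ε • w ∈ interior E :=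
      (continuous_add_const (ε • w)).continuousAt.eventually (isOpen_interior.mem_nhds hint)
    obtain ⟨u, huE, hu⟩ := mem_closure_iff_nhds.1 (mem_frontier_eNbhd_iff.1 hz).2 _ hnhds
    exact hu ((mem_eNbhd_iff hE hε).2 ⟨_, interior_subset huE, (hnorm u).le⟩)

theorem two_mul_inner_le_norm_sq (hε : 0 < ε) (hw : w ∈ contributorDirs E ε x)
    (hz : z ∈ closure (eNbhd E ε)ᶜ) : 2 * ε * ⟪w, z - x⟫ ≤ ‖z - x‖ ^ 2 := by
  have hle := pow_le_pow_left₀ hε.le (le_norm_sub_of_mem_closure_compl hz hw.2) 2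
  rw [show x + ε • w - z = ε • w - (z - x) by abel, norm_sub_sq_real, norm_smul, hw.1, mul_one,
    Real.norm_of_nonneg hε.le, real_inner_smul_left] at hle
  linarith

theorem eventually_forall_mem_of_contributorDirs_subset (hE : IsClosed E) (hε : 0 < ε)
    (hx : x ∈ closure (eNbhd E ε)ᶜ) {U : Set Plane} (hU : IsOpen U)
    (hsub : contributorDirs E ε x ⊆ U) :
    ∀ᶠ z in 𝓝 x, ∀ w, ‖w‖ ≤ 1 → z + ε • w ∈ E → w ∈ U := by
  have hcont : Continuous fun p : Plane × Plane => p.1 + ε • p.2 := by fun_prop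
  have hev : ∀ᶠ z in 𝓝 x, ∀ w ∈ closedBall (0 : Plane) 1, z + ε • w ∈ E → w ∈ U := by
    refine (isCompact_closedBall 0 1).eventually_forall_of_forall_eventually fun w hw => ?_
    by_cases hwE : x + ε • w ∈ E
    · have hwU := hsub
        (mem_contributorDirs_of_mem_closure_compl hε hx (mem_closedBall_zero_iff.1 hw) hwE)
      filter_upwards [continuous_snd.continuousAt.eventually (hU.mem_nhds hwU)] with p hp _
      exact hp
    · filter_upwards [hcont.continuousAt.eventually (hE.isOpen_compl.mem_nhds hwE)] with p hp hpE
      exact (hp hpE).elim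
  simpa using hev

theorem eventually_inner_le_mul_norm (hE : IsClosed E) (hε : 0 < ε)
    (hx : x ∈ closure (eNbhd E ε)ᶜ) {κ : ℝ} (hκ : 0 < κ) :
    ∀ᶠ z in 𝓝 x, z ∈ closure (eNbhd E ε)ᶜ →
      ∀ w ∈ contributorDirs E ε z, ⟪w, z - x⟫ ≤ κ * ‖z - x‖ := by
  filter_upwards [eventually_forall_mem_of_contributorDirs_subset hE hε hx isOpen_thickening
      (self_subset_thickening (half_pos hκ) _), ball_mem_nhds x (mul_pos hε hκ)]
    with z hthick hball hz w hw
  obtain ⟨w', hw', hdist⟩ := mem_thickening_iff.1 (hthick w hw.1.le hw.2)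
  rw [mem_ball, dist_eq_norm] at hball
  have hw'z : ⟪w', z - x⟫ ≤ κ / 2 * ‖z - x‖ := by
    have hsq := two_mul_inner_le_norm_sq hε hw' hz
    have : 2 * ε * ⟪w', z - x⟫ ≤ 2 * ε * (κ / 2 * ‖z - x‖) := by
      nlinarith [norm_nonneg (z - x)]
    exact le_of_mul_le_mul_left this (by positivity)
  have hdiff : ⟪w - w', z - x⟫ ≤ κ / 2 * ‖z - x‖ := by
    refine (real_inner_le_norm _ _).trans ?_
    gcongr
    exact (dist_eq_norm w w' ▸ hdist).le
  rw [inner_sub_left] at hdiff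
  linarith

theorem eventually_add_smul_notMem_eNbhd (hE : IsClosed E) (hε : 0 < ε)
    (hz : z ∈ closure (eNbhd E ε)ᶜ) (hv : ∀ w ∈ contributorDirs E ε z, ⟪w, v⟫ < 0) :
    ∀ᶠ p : Plane × ℝ in 𝓝 (z, 0), p.1 ∈ closure (eNbhd E ε)ᶜ → 0 < p.2 →
      p.1 + p.2 • v ∉ eNbhd E ε := by
  obtain ⟨c, hc, hvc⟩ : ∃ c > 0, ∀ w ∈ contributorDirs E ε z, c ≤ -⟪w, v⟫ :=
    (isCompact_contributorDirs hE).exists_forall_le' (by fun_prop) (by simpa using hv)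
  have hpush : Tendsto (fun p : Plane × ℝ => p.1 + p.2 • v) (𝓝 (z, 0)) (𝓝 z) :=
    Continuous.tendsto' (by fun_prop) _ _ (by simp)
  have hsmall : Tendsto (fun p : Plane × ℝ => p.2 * ‖v‖ ^ 2) (𝓝 (z, 0)) (𝓝 0) :=
    Continuous.tendsto' (by fun_prop) _ _ (by simp)
  have hopen : IsOpen {w : Plane | ⟪w, v⟫ < -c / 2} := isOpen_lt (by fun_prop) continuous_const
  filter_upwards [hpush.eventually (eventually_forall_mem_of_contributorDirs_subset hE hε hz hopen
      fun w hw => show ⟪w, v⟫ < -c / 2 by linarith [hvc w hw]),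
    hsmall.eventually_lt_const (mul_pos hε hc)] with p hdirs hp hcl hpos hmem
  obtain ⟨w, hw, hwE⟩ := (mem_eNbhd_iff_exists_smul hE hε).1 hmem
  have hwv : ⟪w, v⟫ < -c / 2 := hdirs w hw hwE
  have hle := pow_le_pow_left₀ hε.le (le_norm_sub_of_mem_closure_compl hcl hwE) 2
  rw [show p.1 + p.2 • v + ε • w - p.1 = ε • w + p.2 • v by abel, norm_add_sq_real, norm_smul,
    norm_smul, inner_smul_left, inner_smul_right, mul_pow, mul_pow, Real.norm_eq_abs,
    Real.norm_eq_abs, sq_abs, sq_abs] at hle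
  have hw2 : ε ^ 2 * ‖w‖ ^ 2 ≤ ε ^ 2 := mul_le_of_le_one_right (sq_nonneg ε)
    (pow_le_one₀ (norm_nonneg w) hw)
  have hneg : p.2 * (2 * ε * ⟪w, v⟫ + p.2 * ‖v‖ ^ 2) < 0 :=
    mul_neg_of_pos_of_neg hpos (by nlinarith)
  simp only [conj_trivial] at hle
  linarith

end Neighbourhood

/-- The extremal contributors of `z`, recorded as unit directions as in `contributorDirs`. -/
def extremalDirs (E : Set Plane) (ε : ℝ) (z : Plane) : Set Plane :=
  {w ∈ contributorDirs E ε z | ∃ ξ ∈ outwardDirs E ε z, ⟪w, ξ⟫ = 0}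

section Extremal

variable {E : Set Plane} {ε : ℝ} {z ξ η w w₁ w₂ : Plane}

theorem inner_nonpos_of_mem_outwardDirs (hε : 0 < ε) (hξ : ξ ∈ outwardDirs E ε z)
    (hw : w ∈ contributorDirs E ε z) : ⟪w, ξ⟫ ≤ 0 := by
  obtain ⟨-, u, hu, huz, hdir⟩ := hξ
  have hbound : ∀ n, 2 * ε * ⟪w, (‖u n - z‖)⁻¹ • (u n - z)⟫ ≤ ‖u n - z‖ := fun n => by
    have hle := mul_le_mul_of_nonneg_left
      (two_mul_inner_le_norm_sq hε hw (subset_closure (hu n)))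
      (inv_nonneg.2 (norm_nonneg (u n - z)))
    rw [inner_smul_right]
    calc 2 * ε * (‖u n - z‖⁻¹ * ⟪w, u n - z⟫) = ‖u n - z‖⁻¹ * (2 * ε * ⟪w, u n - z⟫) := by ring
      _ ≤ ‖u n - z‖⁻¹ * ‖u n - z‖ ^ 2 := hle
      _ = ‖u n - z‖ := by rw [pow_two, ← mul_assoc, inv_mul_mul_self]
  have hlim : 2 * ε * ⟪w, ξ⟫ ≤ 0 :=
    le_of_tendsto_of_tendsto' ((tendsto_const_nhds.inner hdir).const_mul (2 * ε))
      (tendsto_iff_norm_sub_tendsto_zero.1 huz) hbound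
  exact nonpos_of_mul_nonpos_right hlim (by positivity)

theorem outwardDirs_nonempty (hz : z ∈ frontier (eNbhd E ε)) : (outwardDirs E ε z).Nonempty := by
  obtain ⟨hmem, hcl⟩ := mem_frontier_eNbhd_iff.1 hz
  obtain ⟨u, hu, huz⟩ := mem_closure_iff_seq_limit.1 hcl
  have hsphere : ∀ n, (‖u n - z‖)⁻¹ • (u n - z) ∈ sphere (0 : Plane) 1 := fun n => by
    have hne : u n - z ≠ 0 := sub_ne_zero.2 fun h => hu n (h ▸ hmem)
    simpa using norm_smul_inv_norm (𝕜 := ℝ) hne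
  obtain ⟨ξ, hξ, φ, hφ, hlim⟩ := (isCompact_sphere 0 1).tendsto_subseq hsphere
  exact ⟨ξ, mem_sphere_zero_iff_norm.1 hξ, u ∘ φ, fun n => hu _, huz.comp hφ.tendsto_atTop, hlim⟩

theorem eventually_nhdsGT_add_smul_notMem_eNbhd (hE : IsClosed E) (hε : 0 < ε)
    (hz : z ∈ closure (eNbhd E ε)ᶜ) (hη : ∀ w ∈ contributorDirs E ε z, ⟪w, η⟫ < 0) :
    ∀ᶠ t : ℝ in 𝓝[>] 0, z + t • η ∉ eNbhd E ε := by
  have hpush := (Continuous.prodMk_right z).continuousAt.eventually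
    (eventually_add_smul_notMem_eNbhd hE hε hz hη)
  filter_upwards [hpush.filter_mono nhdsWithin_le_nhds, self_mem_nhdsWithin] with t ht htpos
  exact ht hz htpos

theorem mem_outwardDirs_of_inner_nonpos (hE : IsClosed E) (hε : 0 < ε)
    (hz : z ∈ closure (eNbhd E ε)ᶜ) (hξ : ‖ξ‖ = 1)
    (hle : ∀ w ∈ contributorDirs E ε z, ⟪w, ξ⟫ ≤ 0)
    (hη : ∀ w ∈ contributorDirs E ε z, ⟪w, η⟫ < 0) : ξ ∈ outwardDirs E ε z := by
  let v : ℕ → Plane := fun n => ξ + (1 / ((n : ℝ) + 1)) • η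
  have hv : Tendsto v atTop (𝓝 ξ) := by
    simpa [v] using (tendsto_const_nhds (x := ξ)).add
      ((tendsto_one_div_add_atTop_nhds_zero_nat (𝕜 := ℝ)).smul_const η)
  have hpush : ∀ n : ℕ, ∃ t ∈ Ioo 0 (1 / ((n : ℝ) + 1)), z + t • v n ∉ eNbhd E ε := fun n => by
    have hneg : ∀ w ∈ contributorDirs E ε z, ⟪w, v n⟫ < 0 := fun w hw => by
      rw [inner_add_right, inner_smul_right]
      exact add_neg_of_nonpos_of_neg (hle w hw)
        (mul_neg_of_pos_of_neg Nat.one_div_pos_of_nat (hη w hw))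
    exact (Filter.Eventually.and (Ioo_mem_nhdsGT Nat.one_div_pos_of_nat)
      (eventually_nhdsGT_add_smul_notMem_eNbhd hE hε hz hneg)).exists
  choose t ht htv using hpush
  have ht0 : Tendsto t atTop (𝓝 0) := squeeze_zero (fun n => (ht n).1.le) (fun n => (ht n).2.le)
    tendsto_one_div_add_atTop_nhds_zero_nat
  refine ⟨hξ, fun n => z + t n • v n, htv, by simpa using tendsto_const_nhds.add (ht0.smul hv), ?_⟩
  have hlim : Tendsto (fun n => ‖v n‖⁻¹ • v n) atTop (𝓝 ξ) := by
    simpa [hξ] using (hv.norm.inv₀ (by simp [hξ])).smul hv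
  refine hlim.congr fun n => ?_
  rw [add_sub_cancel_left, norm_smul, Real.norm_of_nonneg (ht n).1.le, smul_smul, mul_inv,
    mul_right_comm, inv_mul_cancel₀ (ht n).1.ne', one_mul]

theorem extContrib_eq_image_extremalDirs (hE : IsClosed E) (hε : 0 < ε)
    (hz : z ∈ frontier (eNbhd E ε)) :
    extContrib E ε z = (fun w => z + ε • w) '' extremalDirs E ε z := by
  rw [extContrib, contributors_eq_image_contributorDirs hE hε hz]
  ext y
  constructor
  · rintro ⟨⟨w, hw, rfl⟩, ξ, hξ, horth⟩
    refine ⟨w, ⟨hw, ξ, hξ, ?_⟩, rfl⟩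
    simpa [inner_smul_left, hε.ne'] using horth
  · rintro ⟨w, ⟨hw, ξ, hξ, horth⟩, rfl⟩
    exact ⟨⟨w, hw, rfl⟩, ξ, hξ, by simp [inner_smul_left, horth]⟩

theorem extremalDirs_eq_pair_of_eq_neg (hε : 0 < ε) (hz : z ∈ frontier (eNbhd E ε))
    (hw₁ : w₁ ∈ contributorDirs E ε z) (hw₂ : w₂ ∈ contributorDirs E ε z) (hneg : w₁ = -w₂) :
    extremalDirs E ε z = {w₁, w₂} := by
  have horth : ∀ ξ ∈ outwardDirs E ε z, ⟪w₂, ξ⟫ = 0 := fun ξ hξ => by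
    have h₁ := inner_nonpos_of_mem_outwardDirs hε hξ hw₁
    rw [hneg, inner_neg_left, neg_nonpos] at h₁
    exact (inner_nonpos_of_mem_outwardDirs hε hξ hw₂).antisymm h₁
  obtain ⟨ξ, hξ⟩ := outwardDirs_nonempty hz
  apply Subset.antisymm
  · rintro w ⟨hw, ξ, hξ, hwξ⟩
    rw [mem_insert_iff, mem_singleton_iff, hneg, or_comm]
    exact eq_or_eq_neg_of_inner_eq_zero hw.1 hw₂.1 hξ.1 hwξ (horth ξ hξ)
  · rintro w (rfl | rfl)
    · exact ⟨hw₁, ξ, hξ, by rw [hneg, inner_neg_left, horth ξ hξ, neg_zero]⟩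
    · exact ⟨hw₂, ξ, hξ, horth ξ hξ⟩

theorem extremalDirs_eq_pair_of_subset_arcSeg (hE : IsClosed E) (hε : 0 < ε)
    (hz : z ∈ frontier (eNbhd E ε)) (hw₁ : w₁ ∈ contributorDirs E ε z)
    (hw₂ : w₂ ∈ contributorDirs E ε z) (hne : w₁ ≠ -w₂)
    (harc : contributorDirs E ε z ⊆ arcSeg w₁ w₂) :
    extremalDirs E ε z = {w₁, w₂} := by
  obtain ⟨η, hη⟩ := exists_forall_mem_arcSeg_inner_neg hw₁.1 hw₂.1 hne
  have hout : ∀ ξ : Plane, ‖ξ‖ = 1 → ⟪w₁, ξ⟫ ≤ 0 → ⟪w₂, ξ⟫ ≤ 0 → ξ ∈ outwardDirs E ε z :=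
    fun ξ hξ h₁ h₂ => mem_outwardDirs_of_inner_nonpos hE hε (mem_frontier_eNbhd_iff.1 hz).2 hξ
      (fun w hw => inner_nonpos_of_mem_arcSeg (harc hw) h₁ h₂) fun w hw => hη w (harc hw)
  have hunique : ∀ ξ ∈ outwardDirs E ε z, ∀ w ∈ contributorDirs E ε z, ⟪w, ξ⟫ = 0 →
      ∀ w' ∈ contributorDirs E ε z, ⟪w', ξ⟫ = 0 → w = w' := by
    intro ξ hξ w hw hwξ w' hw' hw'ξ
    refine (eq_or_eq_neg_of_inner_eq_zero hw.1 hw'.1 hξ.1 hwξ hw'ξ).resolve_right fun h => ?_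
    have hwη := hη w (harc hw)
    rw [h, inner_neg_left] at hwη
    linarith [hη w' (harc hw')]
  apply Subset.antisymm
  · rintro w ⟨hw, ξ, hξ, hwξ⟩
    by_contra hnot
    rw [mem_insert_iff, mem_singleton_iff, not_or] at hnot
    have hlt : ∀ w' ∈ contributorDirs E ε z, w ≠ w' → ⟪w', ξ⟫ < 0 := fun w' hw' hww' =>
      (inner_nonpos_of_mem_outwardDirs hε hξ hw').lt_of_ne fun h =>
        hww' (hunique ξ hξ w hw hwξ w' hw' h)
    exact (inner_neg_of_mem_arcSeg (harc hw) (hlt w₁ hw₁ hnot.1) (hlt w₂ hw₂ hnot.2)).ne hwξ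
  · rintro w (rfl | rfl)
    · obtain ⟨ξ, hξ, h₁, h₂⟩ := exists_norm_eq_one_inner_eq_zero_inner_nonpos hw₁.1 w₂
      exact ⟨hw₁, ξ, hout ξ hξ h₁.le h₂, h₁⟩
    · obtain ⟨ξ, hξ, h₂, h₁⟩ := exists_norm_eq_one_inner_eq_zero_inner_nonpos hw₂.1 w₁
      exact ⟨hw₂, ξ, hout ξ hξ h₁ h₂.le, h₂⟩

theorem exists_extContrib_eq_pair (hE : IsClosed E) (hε : 0 < ε)
    (hz : z ∈ frontier (eNbhd E ε)) :
    ∃ w₁ ∈ contributorDirs E ε z, ∃ w₂ ∈ contributorDirs E ε z,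
      extContrib E ε z = {z + ε • w₁, z + ε • w₂} ∧
        (w₁ = -w₂ ∨ contributorDirs E ε z ⊆ arcSeg w₁ w₂) := by
  obtain ⟨ξ, hξ⟩ := outwardDirs_nonempty hz
  obtain ⟨w₁, hw₁, w₂, hw₂, h⟩ := exists_eq_neg_or_subset_arcSeg (isCompact_contributorDirs hE)
    (contributorDirs_nonempty hE hε hz) (fun w hw => hw.1) hξ.1
    (fun w hw => inner_nonpos_of_mem_outwardDirs hε hξ hw)
  refine ⟨w₁, hw₁, w₂, hw₂, ?_, h⟩
  have hpair : extremalDirs E ε z = {w₁, w₂} := by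
    by_cases hneg : w₁ = -w₂
    · exact extremalDirs_eq_pair_of_eq_neg hε hz hw₁ hw₂ hneg
    · exact extremalDirs_eq_pair_of_subset_arcSeg hE hε hz hw₁ hw₂ hneg (h.resolve_left hneg)
  rw [extContrib_eq_image_extremalDirs hE hε hz, hpair, image_pair]

end Extremal

namespace IsCompOfCompl

variable {E V : Set Plane} {ε : ℝ} {x z v : Plane}

theorem nonempty (hV : IsCompOfCompl E ε V) : V.Nonempty := by
  obtain ⟨z, hz, rfl⟩ := hV
  exact connectedComponentIn_nonempty_iff.2 hz

theorem isOpen (hV : IsCompOfCompl E ε V) : IsOpen V := by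
  obtain ⟨z, -, rfl⟩ := hV
  exact isClosed_closure.isOpen_compl.connectedComponentIn

theorem isPreconnected (hV : IsCompOfCompl E ε V) : IsPreconnected V := by
  obtain ⟨z, -, rfl⟩ := hV
  exact isPreconnected_connectedComponentIn

theorem subset_compl (hV : IsCompOfCompl E ε V) : V ⊆ (eNbhd E ε)ᶜ := by
  obtain ⟨z, -, rfl⟩ := hV
  exact connectedComponentIn_subset _ _

theorem subset_of_isPreconnected (hV : IsCompOfCompl E ε V) {S : Set Plane}
    (hS : IsPreconnected S) (hSE : S ⊆ (eNbhd E ε)ᶜ) (hne : (S ∩ V).Nonempty) : S ⊆ V := by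
  obtain ⟨z, -, rfl⟩ := hV
  obtain ⟨p, hpS, hpV⟩ := hne
  rw [connectedComponentIn_eq hpV]
  exact hS.subset_connectedComponentIn hpS hSE

theorem mem_of_mem_closure (hV : IsCompOfCompl E ε V) (hz : z ∈ closure V)
    (hzE : z ∉ eNbhd E ε) : z ∈ V := by
  obtain ⟨p, hp⟩ := hV.nonempty
  have hconn : IsPreconnected (closure V ∩ (eNbhd E ε)ᶜ) := hV.isPreconnected.subset_closure
    (subset_inter subset_closure hV.subset_compl) inter_subset_left
  exact hV.subset_of_isPreconnected hconn inter_subset_right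
    ⟨p, ⟨subset_closure hp, hV.subset_compl hp⟩, hp⟩ ⟨hz, hzE⟩

theorem mem_closure_compl (hV : IsCompOfCompl E ε V) (hz : z ∈ closure V) :
    z ∈ closure (eNbhd E ε)ᶜ :=
  closure_mono hV.subset_compl hz

theorem eventually_add_smul_mem_closure (hE : IsClosed E) (hε : 0 < ε)
    (hV : IsCompOfCompl E ε V) (hz : z ∈ closure V)
    (hv : ∀ w ∈ contributorDirs E ε z, ⟪w, v⟫ < 0) :
    ∀ᶠ t : ℝ in 𝓝[>] 0, z + t • v ∈ closure V := by
  obtain ⟨r, hr, hpush⟩ := Metric.eventually_nhds_iff.1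
    (eventually_add_smul_notMem_eNbhd hE hε (hV.mem_closure_compl hz) hv)
  filter_upwards [Ioo_mem_nhdsGT hr] with t ht
  have hz' : z ∈ closure (V ∩ ball z r) := isOpen_ball.closure_inter ⟨hz, mem_ball_self hr⟩
  refine map_mem_closure (f := fun u => u + t • v) (by fun_prop) hz' fun u hu => ?_
  have hseg : IsPreconnected ((fun s : ℝ => u + s • v) '' Icc 0 t) :=
    isPreconnected_Icc.image _ (by fun_prop)
  refine hV.subset_of_isPreconnected hseg ?_ ⟨u, ⟨0, ⟨le_rfl, ht.1.le⟩, by simp⟩, hu.1⟩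
    ⟨t, ⟨ht.1.le, le_rfl⟩, rfl⟩
  rintro _ ⟨s, ⟨hs0, hst⟩, rfl⟩
  rcases hs0.eq_or_lt with rfl | hs0
  · simpa using hV.subset_compl hu.1
  · refine hpush (y := (u, s)) ?_ (subset_closure (hV.subset_compl hu.1)) hs0
    rw [Prod.dist_eq, dist_zero_right, Real.norm_of_nonneg hs0.le]
    exact max_lt hu.2 (hst.trans_lt ht.2)

theorem ne_of_isMaxOn (hV : IsCompOfCompl E ε V)
    (hmax : IsMaxOn (fun u => ‖u - x‖) (closure V) z) : z ≠ x := by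
  rintro rfl
  have hsub : V ⊆ {z} := fun u hu => by
    simpa [sub_eq_zero] using hmax (subset_closure hu)
  exact not_isOpen_singleton z (hV.nonempty.subset_singleton_iff.1 hsub ▸ hV.isOpen)

theorem mem_frontier_of_isMaxOn (hV : IsCompOfCompl E ε V) (hz : z ∈ closure V)
    (hmax : IsMaxOn (fun u => ‖u - x‖) (closure V) z) : z ∈ frontier (eNbhd E ε) := by
  rw [mem_frontier_eNbhd_iff]
  refine ⟨by_contra fun hzE => hV.ne_of_isMaxOn hmax ?_, hV.mem_closure_compl hz⟩
  have hray : Tendsto (fun t : ℝ => z + t • (z - x)) (𝓝[>] 0) (𝓝 z) :=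
    (Continuous.tendsto' (by fun_prop) 0 z (by simp)).mono_left nhdsWithin_le_nhds
  have hle := inner_sub_nonpos_of_isMaxOn_norm_sub hmax
    ((hray.eventually (hV.isOpen.mem_nhds (hV.mem_of_mem_closure hz hzE))).mono
      fun t ht => subset_closure ht)
  rwa [real_inner_self_nonpos, sub_eq_zero] at hle

-- Far from opposite, the extremal contributors would leave room to move `z` away from `x`.
theorem inner_le_sub_one_of_isMaxOn (hE : IsClosed E) (hε : 0 < ε) (hV : IsCompOfCompl E ε V)
    (hz : z ∈ closure V) (hmax : IsMaxOn (fun u => ‖u - x‖) (closure V) z) (hzx : z ≠ x)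
    {κ : ℝ} (hκ : κ < 1 / 2) {w₁ w₂ : Plane} (hw₁ : ‖w₁‖ = 1) (hw₂ : ‖w₂‖ = 1)
    (htilt₁ : ⟪w₁, z - x⟫ ≤ κ * ‖z - x‖) (htilt₂ : ⟪w₂, z - x⟫ ≤ κ * ‖z - x‖)
    (harc : contributorDirs E ε z ⊆ arcSeg w₁ w₂) : ⟪w₁, w₂⟫ ≤ κ - 1 := by
  by_contra! hlt
  have hpos : 0 < ‖z - x‖ := norm_pos_iff.2 (sub_ne_zero.2 hzx)
  let v : Plane := (z - x) - ‖z - x‖ • (w₁ + w₂)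
  have hv₁ : ⟪w₁, v⟫ < 0 := by
    rw [inner_sub_right, inner_smul_right, inner_add_right, real_inner_self_eq_norm_sq, hw₁]
    nlinarith
  have hv₂ : ⟪w₂, v⟫ < 0 := by
    rw [inner_sub_right, inner_smul_right, inner_add_right, real_inner_self_eq_norm_sq, hw₂,
      real_inner_comm w₁ w₂]
    nlinarith
  have haway : 0 < ⟪z - x, v⟫ := by
    rw [inner_sub_right, inner_smul_right, inner_add_right, real_inner_self_eq_norm_sq,
      real_inner_comm w₁, real_inner_comm w₂, pow_two, ← mul_sub]
    exact mul_pos hpos (by nlinarith)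
  exact haway.not_ge (inner_sub_nonpos_of_isMaxOn_norm_sub hmax
    (hV.eventually_add_smul_mem_closure hE hε hz fun w hw =>
      inner_neg_of_mem_arcSeg (harc hw) hv₁ hv₂))

end IsCompOfCompl

section ChainSequence

variable {E : Set Plane} {ε : ℝ} {x z : Plane}

theorem isSingularity_of_contributors_nontrivial (hz : z ∈ frontier (eNbhd E ε))
    (hcontr : (contributors E ε z).Nontrivial) : IsSingularity E ε z := by
  refine ⟨hz, fun ⟨⟨_, y, hy⟩, _⟩ => ?_⟩
  exact not_nontrivial_singleton (hy ▸ hcontr)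

theorem exists_isSingularity_inner_le (hE : IsClosed E) (hε : 0 < ε)
    (hcomp : ∀ r > 0, ∃ V, IsCompOfCompl E ε V ∧ V ⊆ closedBall x r) {κ : ℝ} (hκ : 0 < κ)
    (hκ' : κ < 1 / 2) :
    ∃ z, IsSingularity E ε z ∧ z ≠ x ∧ dist z x ≤ κ ∧
      ∃ w₁ ∈ contributorDirs E ε z, ∃ w₂ ∈ contributorDirs E ε z,
        extContrib E ε z = {z + ε • w₁, z + ε • w₂} ∧ ⟪w₁, w₂⟫ ≤ κ - 1 := by
  have hx : x ∈ closure (eNbhd E ε)ᶜ := Metric.mem_closure_iff.2 fun r hr => by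
    obtain ⟨V, hV, hVr⟩ := hcomp (r / 2) (half_pos hr)
    obtain ⟨u, hu⟩ := hV.nonempty
    exact ⟨u, hV.subset_compl hu, by
      rw [dist_comm]; exact (mem_closedBall.1 (hVr hu)).trans_lt (half_lt_self hr)⟩
  obtain ⟨r, hr, htilt⟩ := Metric.eventually_nhds_iff.1 (eventually_inner_le_mul_norm hE hε hx hκ)
  obtain ⟨V, hV, hVr⟩ := hcomp (min κ (r / 2)) (lt_min hκ (half_pos hr))
  have hVr : closure V ⊆ closedBall x (min κ (r / 2)) := closure_minimal hVr isClosed_closedBall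
  obtain ⟨z, hz, hmax⟩ := ((isCompact_closedBall x _).of_isClosed_subset isClosed_closure
    hVr).exists_isMaxOn hV.nonempty.closure (f := fun u => ‖u - x‖) (by fun_prop)
  obtain ⟨hzκ, hzr⟩ := le_min_iff.1 (mem_closedBall.1 (hVr hz))
  have hzx := hV.ne_of_isMaxOn hmax
  have hzF := hV.mem_frontier_of_isMaxOn hz hmax
  have htilt := htilt (by linarith : dist z x < r) (hV.mem_closure_compl hz)
  obtain ⟨w₁, hw₁, w₂, hw₂, hext, hdirs⟩ := exists_extContrib_eq_pair hE hε hzF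
  have hinner : ⟪w₁, w₂⟫ ≤ κ - 1 := by
    rcases hdirs with hneg | harc
    · rw [(inner_eq_neg_one_iff_of_norm_eq_one hw₁.1 hw₂.1).2 hneg]
      linarith
    · exact hV.inner_le_sub_one_of_isMaxOn hE hε hz hmax hzx hκ' hw₁.1 hw₂.1 (htilt _ hw₁)
        (htilt _ hw₂) harc
  refine ⟨z, isSingularity_of_contributors_nontrivial hzF ?_, hzx, hzκ, w₁, hw₁, w₂, hw₂,
    hext, hinner⟩
  rw [contributors_eq_image_contributorDirs hE hε hzF]
  have hne : w₁ ≠ w₂ := by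
    rintro rfl
    rw [real_inner_self_eq_norm_sq, hw₁.1] at hinner
    linarith
  exact Set.Nontrivial.image ⟨w₁, hw₁, w₂, hw₂, hne⟩
    ((add_right_injective z).comp (smul_right_injective _ hε.ne'))

theorem exists_isChainSeq_of_forall_exists_subset_closedBall (hE : IsClosed E) (hε : 0 < ε)
    (hcomp : ∀ r > 0, ∃ V, IsCompOfCompl E ε V ∧ V ⊆ closedBall x r) :
    ∃ u, IsChainSeq E ε x u := by
  have hκ : ∀ n : ℕ, 1 / ((n : ℝ) + 3) ∈ Ioo 0 (1 / 2) := fun n => ⟨by positivity, by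
    gcongr; linarith [n.cast_nonneg (α := ℝ)]⟩
  have hκ0 : Tendsto (fun n : ℕ => 1 / ((n : ℝ) + 3)) atTop (𝓝 0) :=
    tendsto_const_nhds.div_atTop (tendsto_atTop_add_const_right _ _ tendsto_natCast_atTop_atTop)
  choose u hsing hne hdist w₁ hw₁ w₂ hw₂ hext hinner using fun n =>
    exists_isSingularity_inner_le hE hε hcomp (hκ n).1 (hκ n).2
  have hge : ∀ n, -1 ≤ ⟪w₁ n, w₂ n⟫ := fun n =>
    neg_one_le_real_inner_of_norm_eq_one (hw₁ n).1 (hw₂ n).1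
  have hopp : Tendsto (fun n => ⟪w₁ n, w₂ n⟫) atTop (𝓝 (-1)) :=
    tendsto_of_tendsto_of_tendsto_of_le_of_le tendsto_const_nhds
      (by simpa using hκ0.sub_const 1) hge hinner
  exact ⟨u, hsing, hne, tendsto_iff_dist_tendsto_zero.2 (squeeze_zero (fun _ => dist_nonneg) hdist
    hκ0), fun n => u n + ε • w₁ n, fun n => u n + ε • w₂ n, hext, by simpa [smul_smul, hε.ne']⟩

end ChainSequence

/-- The abscissae, in the frame `b` centred at `x`, at which the strip of half-width `ε / 2` around
the axis `b 0` is crossed by `E_ε` and still contains a limit of points of the complement. Chain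
singularities near `x` occur at such abscissae, and consecutive ones enclose components of the
complement. -/
def pinchLevels (E : Set Plane) (ε : ℝ) (x : Plane) (b : OrthonormalBasis (Fin 2) ℝ Plane) :
    Set ℝ :=
  {a | (∀ v, ⟪b 0, v - x⟫ = a → |⟪b 1, v - x⟫| ≤ ε / 2 → v ∈ eNbhd E ε) ∧
    ∃ u ∈ closure (eNbhd E ε)ᶜ, ⟪b 0, u - x⟫ = a ∧ |⟪b 1, u - x⟫| < ε / 2}

section Pinch

variable {E : Set Plane} {ε : ℝ} {x : Plane}

theorem IsChainSeq.exists_contributorDirs_tendsto_inner (hE : IsClosed E) (hε : 0 < ε)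
    {u : ℕ → Plane} (hu : IsChainSeq E ε x u) :
    ∃ w₁ w₂ : ℕ → Plane, (∀ n, w₁ n ∈ contributorDirs E ε (u n)) ∧
      (∀ n, w₂ n ∈ contributorDirs E ε (u n)) ∧
      Tendsto (fun n => ⟪w₁ n, w₂ n⟫) atTop (𝓝 (-1)) := by
  obtain ⟨hsing, -, -, y₁, y₂, hext, hinner⟩ := hu
  have hdir : ∀ n, ∀ y ∈ extContrib E ε (u n),
      ∃ w ∈ contributorDirs E ε (u n), u n + ε • w = y := fun n y hy => by
    have hcontr := hy.1
    rwa [contributors_eq_image_contributorDirs hE hε (hsing n).1] at hcontr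
  choose w₁ hw₁ hy₁ using fun n => hdir n (y₁ n) (hext n ▸ mem_insert _ _)
  choose w₂ hw₂ hy₂ using fun n => hdir n (y₂ n) (hext n ▸ mem_insert_of_mem _ rfl)
  exact ⟨w₁, w₂, hw₁, hw₂, by simpa [← hy₁, ← hy₂, smul_smul, hε.ne'] using hinner⟩

theorem exists_frequently_half_lt_inner (hE : IsClosed E) {u w₁ w₂ : ℕ → Plane}
    (hux : Tendsto u atTop (𝓝 x)) (hw₁ : ∀ n, w₁ n ∈ contributorDirs E ε (u n))
    (hw₂ : ∀ n, w₂ n ∈ contributorDirs E ε (u n))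
    (hopp : Tendsto (fun n => ⟪w₁ n, w₂ n⟫) atTop (𝓝 (-1))) :
    ∃ f ∈ contributorDirs E ε x, -f ∈ contributorDirs E ε x ∧
      ∃ᶠ n in atTop, 1 / 2 < ⟪w₁ n, f⟫ ∧ 1 / 2 < ⟪w₂ n, -f⟫ := by
  obtain ⟨⟨f, g⟩, ⟨hf, hg⟩, φ, hφ, hlim⟩ :=
    ((isCompact_sphere (0 : Plane) 1).prod (isCompact_sphere (0 : Plane) 1)).tendsto_subseq
      (x := fun n => (w₁ n, w₂ n)) fun n => by simp [(hw₁ n).1, (hw₂ n).1]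
  rw [mem_sphere_zero_iff_norm] at hf hg
  obtain ⟨hlim₁, hlim₂⟩ := Prod.tendsto_iff _ _ |>.1 hlim
  obtain rfl : g = -f := by
    rw [← inner_eq_neg_one_iff_of_norm_eq_one (𝕜 := ℝ) hg hf, real_inner_comm]
    exact tendsto_nhds_unique (hlim₁.inner hlim₂) (hopp.comp hφ.tendsto_atTop)
  have hmem : ∀ {w : ℕ → Plane} {h : Plane}, (∀ n, w n ∈ contributorDirs E ε (u n)) →
      Tendsto (w ∘ φ) atTop (𝓝 h) → x + ε • h ∈ E := fun hw hh =>
    hE.mem_of_tendsto ((hux.comp hφ.tendsto_atTop).add (hh.const_smul ε))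
      (.of_forall fun n => (hw (φ n)).2)
  have hhalf : ∀ {w : ℕ → Plane} {h : Plane}, ‖h‖ = 1 → Tendsto w atTop (𝓝 h) →
      ∀ᶠ n in atTop, 1 / 2 < ⟪w n, h⟫ := fun hh hw =>
    (hw.inner (𝕜 := ℝ) tendsto_const_nhds).eventually_const_lt
      (by rw [real_inner_self_eq_norm_sq, hh]; norm_num)
  exact ⟨f, ⟨hf, hmem hw₁ hlim₁⟩, ⟨hg, hmem hw₂ hlim₂⟩, hφ.tendsto_atTop.frequently
    ((hhalf hf hlim₁).and (hhalf hg hlim₂)).frequently⟩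

theorem add_smul_mem_eNbhd_of_half_lt_inner (hE : IsClosed E) (hε : 0 < ε) {u w f : Plane}
    (hw : w ∈ contributorDirs E ε u) (hf : ‖f‖ = 1) (hwf : 1 / 2 < ⟪w, f⟫) {t : ℝ} (ht : 0 ≤ t)
    (htε : t ≤ ε) : u + t • f ∈ eNbhd E ε := by
  refine (mem_eNbhd_iff hE hε).2 ⟨_, hw.2, le_of_sq_le_sq ?_ hε.le⟩
  rw [add_sub_add_left_eq_sub, norm_sub_sq_real, norm_smul, norm_smul, hw.1, hf,
    real_inner_smul_left, inner_smul_right, mul_one, mul_one, Real.norm_eq_abs, Real.norm_eq_abs,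
    sq_abs, sq_abs]
  have hεt : ε * t ≤ 2 * (ε * (t * ⟪w, f⟫)) := by nlinarith [mul_nonneg hε.le ht]
  nlinarith

variable {b : OrthonormalBasis (Fin 2) ℝ Plane}

theorem inner_sub_mem_pinchLevels (hE : IsClosed E) (hε : 0 < ε) {u w₁ w₂ : Plane}
    (hu : u ∈ closure (eNbhd E ε)ᶜ) (hub : |⟪b 1, u - x⟫| < ε / 2)
    (hw₁ : w₁ ∈ contributorDirs E ε u) (hw₂ : w₂ ∈ contributorDirs E ε u)
    (h₁ : 1 / 2 < ⟪w₁, b 1⟫) (h₂ : 1 / 2 < ⟪w₂, -b 1⟫) :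
    ⟪b 0, u - x⟫ ∈ pinchLevels E ε x b := by
  refine ⟨fun v hv₀ hv₁ => ?_, u, hu, rfl, hub⟩
  have hdiff : ∀ i, ⟪b i, v - u⟫ = ⟪b i, v - x⟫ - ⟪b i, u - x⟫ := fun i => by
    rw [← inner_sub_right, sub_sub_sub_cancel_right]
  have hvu : v = u + ⟪b 1, v - u⟫ • b 1 := by
    have hbasis := orthonormalBasis_eq_inner_smul_add b (v - u)
    rwa [hdiff 0, hv₀, sub_self, zero_smul, zero_add, sub_eq_iff_eq_add'] at hbasis
  have ht : |⟪b 1, v - u⟫| ≤ ε := by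
    rw [hdiff 1]
    linarith [abs_sub ⟪b 1, v - x⟫ ⟪b 1, u - x⟫]
  rw [hvu]
  rcases le_total 0 ⟪b 1, v - u⟫ with hpos | hneg
  · exact add_smul_mem_eNbhd_of_half_lt_inner hE hε hw₁ (b.norm_eq_one 1) h₁ hpos (abs_le.1 ht).2
  · rw [← neg_smul_neg]
    exact add_smul_mem_eNbhd_of_half_lt_inner hE hε hw₂ (by simp) h₂ (neg_nonneg.2 hneg)
      (neg_le.1 (abs_le.1 ht).1)

-- The disks of radius `ε` about `x ± ε • b 1` leave only a thin double cusp along the axis `b 0`.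
theorem three_mul_abs_inner_le_abs_inner (hε : 0 < ε) (hb : b 1 ∈ contributorDirs E ε x)
    (hb' : -b 1 ∈ contributorDirs E ε x) {v : Plane} (hv : v ∈ closure (eNbhd E ε)ᶜ)
    (h₀ : |⟪b 0, v - x⟫| ≤ ε / 2) (h₁ : |⟪b 1, v - x⟫| ≤ ε / 2) :
    3 * |⟪b 1, v - x⟫| ≤ |⟪b 0, v - x⟫| := by
  have hle := two_mul_inner_le_norm_sq hε hb hv
  have hle' := two_mul_inner_le_norm_sq hε hb' hv
  rw [inner_neg_left] at hle'
  have habs : 2 * ε * |⟪b 1, v - x⟫| ≤ |⟪b 0, v - x⟫| ^ 2 + |⟪b 1, v - x⟫| ^ 2 := by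
    rw [sq_abs, sq_abs, orthonormalBasis_inner_sq_add_inner_sq]
    rcases abs_choice ⟪b 1, v - x⟫ with h | h <;> rw [h] <;> assumption
  nlinarith [abs_nonneg ⟪b 0, v - x⟫, abs_nonneg ⟪b 1, v - x⟫]

theorem frequently_mem_pinchLevels (hE : IsClosed E) (hε : 0 < ε)
    (hb : b 1 ∈ contributorDirs E ε x) (hb' : -b 1 ∈ contributorDirs E ε x)
    {u w₁ w₂ : ℕ → Plane} (hu : ∀ n, u n ∈ closure (eNbhd E ε)ᶜ) (hne : ∀ n, u n ≠ x)
    (hux : Tendsto u atTop (𝓝 x)) (hw₁ : ∀ n, w₁ n ∈ contributorDirs E ε (u n))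
    (hw₂ : ∀ n, w₂ n ∈ contributorDirs E ε (u n))
    (hopp : ∃ᶠ n in atTop, 1 / 2 < ⟪w₁ n, b 1⟫ ∧ 1 / 2 < ⟪w₂ n, -b 1⟫) :
    ∃ᶠ a in 𝓝[≠] 0, a ∈ pinchLevels E ε x b := by
  have hlim : ∀ i, Tendsto (fun n => ⟪b i, u n - x⟫) atTop (𝓝 0) := fun i =>
    (Continuous.tendsto' (f := fun v => ⟪b i, v - x⟫) (by fun_prop) x 0 (by simp)).comp hux
  have hsmall : ∀ i, ∀ᶠ n in atTop, |⟪b i, u n - x⟫| < ε / 2 := fun i =>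
    (hlim i).abs.eventually_lt_const (by simpa using hε)
  rw [frequently_nhdsWithin_iff]
  refine (hlim 0).frequently ((hopp.and_eventually ((hsmall 0).and (hsmall 1))).mono ?_)
  rintro n ⟨⟨h₁, h₂⟩, hs₀, hs₁⟩
  refine ⟨inner_sub_mem_pinchLevels hE hε (hu n) hs₁ (hw₁ n) (hw₂ n) h₁ h₂, fun h₀ => ?_⟩
  have hflat := three_mul_abs_inner_le_abs_inner hε hb hb' (hu n) hs₀.le hs₁.le
  rw [h₀, abs_zero] at hflat
  have hz : ⟪b 1, u n - x⟫ = 0 := abs_nonpos_iff.1 (by linarith)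
  refine hne n (sub_eq_zero.1 ?_)
  rw [orthonormalBasis_eq_inner_smul_add b (u n - x), h₀, hz, zero_smul, zero_smul, add_zero]

theorem mem_pinchLevels_map_neg {a : ℝ} :
    a ∈ pinchLevels E ε x (b.map (.neg ℝ)) ↔ -a ∈ pinchLevels E ε x b := by
  simp [pinchLevels, neg_eq_iff_eq_neg]

theorem IsChainSeq.exists_frequently_mem_pinchLevels (hE : IsClosed E) (hε : 0 < ε)
    {u : ℕ → Plane} (hu : IsChainSeq E ε x u) :
    ∃ b : OrthonormalBasis (Fin 2) ℝ Plane, b 1 ∈ contributorDirs E ε x ∧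
      -b 1 ∈ contributorDirs E ε x ∧ ∃ᶠ a in 𝓝[>] 0, a ∈ pinchLevels E ε x b := by
  obtain ⟨w₁, w₂, hw₁, hw₂, hinner⟩ := hu.exists_contributorDirs_tendsto_inner hE hε
  obtain ⟨hsing, hne, hux, -⟩ := hu
  obtain ⟨f, hf, hf', hopp⟩ := exists_frequently_half_lt_inner hE hux hw₁ hw₂ hinner
  obtain ⟨b, rfl⟩ := exists_orthonormalBasis_fin_two_apply_eq 1 hf.1
  have hfreq := frequently_mem_pinchLevels hE hε hf hf'
    (fun n => (mem_frontier_eNbhd_iff.1 (hsing n).1).2) hne hux hw₁ hw₂ hopp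
  rw [← nhdsLT_sup_nhdsGT, frequently_sup] at hfreq
  rcases hfreq with hlt | hgt
  · refine ⟨b.map (.neg ℝ), by simpa using hf', by simpa using hf, ?_⟩
    have hneg : Tendsto (fun a : ℝ => -a) (𝓝[<] 0) (𝓝[>] 0) := by
      simpa using tendsto_neg_nhdsLT (a := (0 : ℝ))
    exact hneg.frequently (hlt.mono fun a ha => mem_pinchLevels_map_neg.2 (by rwa [neg_neg]))
  · exact ⟨b, hf, hf', hgt⟩

theorem exists_isCompOfCompl_between_pinchLevels (hε : 0 < ε)
    (hb : b 1 ∈ contributorDirs E ε x) (hb' : -b 1 ∈ contributorDirs E ε x) {α a β : ℝ}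
    (hα : α ∈ pinchLevels E ε x b) (ha : a ∈ pinchLevels E ε x b) (hβ : β ∈ pinchLevels E ε x b)
    (hα₀ : 0 ≤ α) (hαa : α < a) (haβ : a < β) (hβε : β ≤ ε / 2) :
    ∃ V, IsCompOfCompl E ε V ∧ (∀ v ∈ V, ⟪b 0, v - x⟫ ∈ Ioo α β) ∧ V ⊆ closedBall x (2 * β) := by
  let L (i : Fin 2) (v : Plane) : ℝ := ⟪b i, v - x⟫
  have hL : ∀ i, Continuous (L i) := fun i => by fun_prop
  let pocket : Set Plane := {v | L 0 v ∈ Ioo α β ∧ |L 1 v| < ε / 2}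
  have hopen : IsOpen pocket :=
    (isOpen_Ioo.preimage (hL 0)).inter (isOpen_lt (hL 1).abs continuous_const)
  have hclosure : closure pocket ⊆ {v | L 0 v ∈ Icc α β ∧ |L 1 v| ≤ ε / 2} :=
    closure_minimal (fun v hv => ⟨Ioo_subset_Icc_self hv.1, hv.2.le⟩)
      ((isClosed_Icc.preimage (hL 0)).inter (isClosed_le (hL 1).abs continuous_const))
  obtain ⟨u, hu, rfl, hu₁⟩ := ha.2
  obtain ⟨z, hzP, hz⟩ := mem_closure_iff.1 hu pocket hopen ⟨⟨hαa, haβ⟩, hu₁⟩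
  have hflat : ∀ v ∉ eNbhd E ε, v ∈ closure pocket → 3 * |L 1 v| ≤ L 0 v := fun v hv hvP => by
    obtain ⟨hv₀, hv₁⟩ := hclosure hvP
    have habs : |L 0 v| = L 0 v := abs_of_nonneg (hα₀.trans hv₀.1)
    exact habs ▸ three_mul_abs_inner_le_abs_inner hε hb hb' (subset_closure hv)
      (habs.trans_le (hv₀.2.trans hβε)) hv₁
  refine ⟨connectedComponentIn (eNbhd E ε)ᶜ z, ⟨z, hz, rfl⟩, ?_⟩
  have hsub : connectedComponentIn (eNbhd E ε)ᶜ z ⊆ pocket := by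
    refine isPreconnected_connectedComponentIn.subset_of_closure_inter_subset hopen
      ⟨z, mem_connectedComponentIn hz, hzP⟩ ?_
    rintro v ⟨hvP, hvV⟩
    have hv := connectedComponentIn_subset _ _ hvV
    obtain ⟨hv₀, hv₁⟩ := hclosure hvP
    refine ⟨⟨hv₀.1.lt_of_ne' fun h => hv (hα.1 v h hv₁),
      hv₀.2.lt_of_ne fun h => hv (hβ.1 v h hv₁)⟩, ?_⟩
    linarith [hflat v hv hvP, hv₀.2]
  refine ⟨fun v hv => (hsub hv).1, fun v hv => ?_⟩
  have hv₁ := hflat v (connectedComponentIn_subset _ _ hv) (subset_closure (hsub hv))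
  have hv₀ := (hsub hv).1
  rw [mem_closedBall, dist_eq_norm]
  refine le_of_sq_le_sq ?_ (by linarith)
  rw [← orthonormalBasis_inner_sq_add_inner_sq b, ← sq_abs ⟪b 1, v - x⟫]
  change L 0 v ^ 2 + |L 1 v| ^ 2 ≤ _
  nlinarith [abs_nonneg (L 1 v), hv₀.1, hv₀.2]

end Pinch

theorem exists_seq_strictAnti_tendsto_of_frequently_nhdsGT {S : Set ℝ} {a c : ℝ} (hac : a < c)
    (hS : ∃ᶠ t in 𝓝[>] a, t ∈ S) :
    ∃ p : ℕ → ℝ, StrictAnti p ∧ Tendsto p atTop (𝓝 a) ∧ ∀ n, p n ∈ S ∩ Ioc a c := by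
  have hfreq : ∃ᶠ t in 𝓝[>] a, t ∈ S ∩ Ioc a c := hS.and_eventually (Ioc_mem_nhdsGT hac)
  have hglb : IsGLB (S ∩ Ioc a c) a := isGLB_of_mem_closure (fun _ ht => ht.2.1.le)
    (mem_closure_iff_frequently.2 (hfreq.filter_mono nhdsWithin_le_nhds))
  obtain ⟨p, hp, -, hlim, hmem⟩ := hglb.exists_seq_strictAnti_tendsto_of_notMem
    (fun ha => ha.2.1.false) hfreq.exists
  exact ⟨p, hp, hlim, hmem⟩

section HausdorffSingleton

variable {X : Type*} [PseudoMetricSpace X] {x : X}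

theorem hausdorffEDist_singleton_le_of_subset_closedBall {s : Set X} {r : ℝ} (hs : s.Nonempty)
    (hsr : s ⊆ closedBall x r) : hausdorffEDist {x} s ≤ ENNReal.ofReal r := by
  have hle : ∀ y ∈ s, edist y x ≤ ENNReal.ofReal r := fun y hy =>
    edist_dist y x ▸ ENNReal.ofReal_le_ofReal (hsr hy)
  obtain ⟨y, hy⟩ := hs
  refine hausdorffEDist_le_of_mem_edist ?_ fun z hz => ⟨x, rfl, hle z hz⟩
  rintro _ rfl
  exact ⟨y, hy, edist_comm _ y ▸ hle y hy⟩

theorem subset_closedBall_of_hausdorffEDist_singleton_le {s : Set X} {r : ℝ} (hr : 0 ≤ r)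
    (hsr : hausdorffEDist {x} s ≤ ENNReal.ofReal r) : s ⊆ closedBall x r := fun y hy => by
  have hle := infEDist_le_hausdorffEDist_of_mem (t := {x}) hy
  rw [infEDist_singleton, hausdorffEDist_comm] at hle
  exact (edist_le_ofReal hr).1 (hle.trans hsr)

theorem tendsto_hausdorffEDist_singleton_iff {V : ℕ → Set X} (hV : ∀ n, (V n).Nonempty) :
    Tendsto (fun n => hausdorffEDist {x} (V n)) atTop (𝓝 0) ↔
      ∀ r > 0, ∀ᶠ n in atTop, V n ⊆ closedBall x r := by
  constructor
  · intro h r hr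
    filter_upwards [h.eventually_le_const (ENNReal.ofReal_pos.2 hr)] with n hn
    exact subset_closedBall_of_hausdorffEDist_singleton_le hr.le hn
  · refine fun h => ENNReal.tendsto_nhds_zero.2 fun δ hδ => ?_
    obtain ⟨r, hr, hrδ⟩ := ENNReal.lt_iff_exists_nnreal_btwn.1 hδ
    filter_upwards [h r (by simpa using hr)] with n hn
    exact (hausdorffEDist_singleton_le_of_subset_closedBall (hV n) hn).trans (by simpa using hrδ.le)

end HausdorffSingleton

section General

variable {E : Set Plane} {ε : ℝ} {x : Plane}

theorem IsChainSeq.exists_pairwise_disjoint_isCompOfCompl (hE : IsClosed E) (hε : 0 < ε)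
    {u : ℕ → Plane} (hu : IsChainSeq E ε x u) :
    ∃ Vs : ℕ → Set Plane, (∀ n, IsCompOfCompl E ε (Vs n)) ∧
      (Pairwise fun m n => Disjoint (Vs m) (Vs n)) ∧
      Tendsto (fun n => hausdorffEDist {x} (Vs n)) atTop (𝓝 0) := by
  obtain ⟨b, hb, hb', hfreq⟩ := hu.exists_frequently_mem_pinchLevels hE hε
  obtain ⟨p, hp, hlim, hmem⟩ :=
    exists_seq_strictAnti_tendsto_of_frequently_nhdsGT (half_pos hε) hfreq
  choose Vs hVs hstrip hball using fun n =>
    exists_isCompOfCompl_between_pinchLevels hε hb hb' (hmem (2 * (n + 1))).1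
      (hmem (2 * n + 1)).1 (hmem (2 * n)).1 (hmem _).2.1.le (hp (by omega)) (hp (by omega))
      (hmem _).2.2
  have hanti : Antitone fun n => p (2 * n) := hp.antitone.comp_monotone fun m n h => by omega
  refine ⟨Vs, hVs, fun m n hmn => Set.disjoint_left.2 fun v hvm hvn => ?_,
    (tendsto_hausdorffEDist_singleton_iff fun n => (hVs n).nonempty).2 fun r hr => ?_⟩
  · exact Set.disjoint_left.1 (hanti.pairwise_disjoint_on_Ioo_succ hmn) (hstrip m v hvm)
      (hstrip n v hvn)
  · have hlim₂ : Tendsto (fun n => 2 * p (2 * n)) atTop (𝓝 0) := by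
      simpa using (hlim.comp (tendsto_id.const_mul_atTop' two_pos)).const_mul 2
    filter_upwards [hlim₂.eventually_le_const hr] with n hn
    exact (hball n).trans (closedBall_subset_closedBall hn)

theorem characterisation_of_chain_singularities_general (hE : IsClosed E) (hε : 0 < ε)
    (x : Plane) :
    (∃ Vs : ℕ → Set Plane, (∀ n, IsCompOfCompl E ε (Vs n)) ∧
      (Pairwise fun m n => Disjoint (Vs m) (Vs n)) ∧
      Tendsto (fun n => hausdorffEDist {x} (Vs n)) atTop (𝓝 0)) ↔
    ∃ u : ℕ → Plane, IsChainSeq E ε x u := by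
  constructor
  · rintro ⟨Vs, hVs, -, hlim⟩
    rw [tendsto_hausdorffEDist_singleton_iff fun n => (hVs n).nonempty] at hlim
    refine exists_isChainSeq_of_forall_exists_subset_closedBall hE hε fun r hr => ?_
    obtain ⟨n, hn⟩ := (hlim r hr).exists
    exact ⟨Vs n, hVs n, hn⟩
  · rintro ⟨u, hu⟩
    exact hu.exists_pairwise_disjoint_isCompOfCompl hE hε

end General

section Compact

theorem isPreconnected_compl_closedBall_of_one_lt_rank {F : Type*} [NormedAddCommGroup F]
    [NormedSpace ℝ F] (hF : 1 < Module.rank ℝ F) (c : F) {R : ℝ} (hR : 0 ≤ R) :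
    IsPreconnected (closedBall c R)ᶜ := by
  have himage : (fun p : ℝ × F => c + p.1 • p.2) '' (Ioi R ×ˢ sphere 0 1) = (closedBall c R)ᶜ := by
    ext u
    simp only [mem_image, mem_prod, Prod.exists, mem_compl_iff, mem_closedBall, not_le,
      dist_eq_norm, mem_Ioi, mem_sphere_zero_iff_norm]
    constructor
    · rintro ⟨t, w, ⟨ht, hw⟩, rfl⟩
      rwa [add_sub_cancel_left, norm_smul, hw, mul_one, Real.norm_of_nonneg (hR.trans ht.le)]
    · intro hu
      have hpos := (hR.trans_lt hu).ne'
      exact ⟨‖u - c‖, ‖u - c‖⁻¹ • (u - c), ⟨hu, by simp [norm_smul, hpos]⟩, by simp [hpos]⟩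
  exact himage ▸ (isPreconnected_Ioi.prod (isPreconnected_sphere hF 0 1)).image _ (by fun_prop)

variable {E V W : Set Plane} {ε : ℝ}

theorem isBounded_eNbhd (hE : Bornology.IsBounded E) : Bornology.IsBounded (eNbhd E ε) := by
  rw [eNbhd, ← thickening_eq_biUnion_ball]
  exact hE.thickening.closure

namespace IsCompOfCompl

theorem isBounded_of_disjoint (hE : Bornology.IsBounded E) (hV : IsCompOfCompl E ε V)
    (hW : IsCompOfCompl E ε W) (hVW : Disjoint V W) (hVb : ¬Bornology.IsBounded V) :
    Bornology.IsBounded W := by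
  obtain ⟨R, hR, hsub⟩ := (isBounded_eNbhd (ε := ε) hE).subset_closedBall_lt 0 0
  have hrank : 1 < Module.rank ℝ Plane := by
    rw [← Module.finrank_eq_rank, finrank_euclideanSpace_fin]
    norm_num
  have houtside : ∀ {U}, IsCompOfCompl E ε U → ¬Bornology.IsBounded U → (closedBall 0 R)ᶜ ⊆ U :=
    fun {U} hU hUb => hU.subset_of_isPreconnected
      (isPreconnected_compl_closedBall_of_one_lt_rank hrank 0 hR.le) (compl_subset_compl.2 hsub)
      (not_disjoint_iff_nonempty_inter.1 fun hdisj =>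
        hUb (isBounded_closedBall.subset (disjoint_compl_left_iff_subset.1 hdisj)))
  by_contra hWb
  have hempty : (closedBall (0 : Plane) R)ᶜ = ∅ :=
    (hVW.mono (houtside hV hVb) (houtside hW hWb)).eq_bot_of_self
  exact NormedSpace.unbounded_univ ℝ Plane
    (isBounded_closedBall.subset (compl_empty_iff.1 hempty).ge)

theorem eventually_isBounded (hE : Bornology.IsBounded E) {Vs : ℕ → Set Plane}
    (hVs : ∀ n, IsCompOfCompl E ε (Vs n)) (hdisj : Pairwise fun m n => Disjoint (Vs m) (Vs n)) :
    ∀ᶠ n in atTop, Bornology.IsBounded (Vs n) := by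
  by_cases hbdd : ∀ n, Bornology.IsBounded (Vs n)
  · exact .of_forall hbdd
  · obtain ⟨m, hm⟩ := not_forall.1 hbdd
    filter_upwards [eventually_gt_atTop m] with n hn
    exact (hVs m).isBounded_of_disjoint hE (hVs n) (hdisj hn.ne) hm

end IsCompOfCompl

theorem tendsto_hausdorffDist_iff_tendsto_hausdorffEDist (hE : Bornology.IsBounded E)
    {Vs : ℕ → Set Plane} (hVs : ∀ n, IsCompOfCompl E ε (Vs n))
    (hdisj : Pairwise fun m n => Disjoint (Vs m) (Vs n)) (x : Plane) :
    Tendsto (fun n => hausdorffDist {x} (Vs n)) atTop (𝓝 0) ↔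
      Tendsto (fun n => hausdorffEDist {x} (Vs n)) atTop (𝓝 0) := by
  constructor
  · intro h
    have hofReal := ENNReal.tendsto_ofReal h
    rw [ENNReal.ofReal_zero] at hofReal
    refine hofReal.congr' ?_
    filter_upwards [IsCompOfCompl.eventually_isBounded hE hVs hdisj] with n hn
    exact ENNReal.ofReal_toReal (hausdorffEDist_ne_top_of_nonempty_of_bounded
      (singleton_nonempty x) (hVs n).nonempty Bornology.isBounded_singleton hn)
  · exact fun h => (ENNReal.tendsto_toReal ENNReal.zero_ne_top).comp h

end Compact

/-- Characterisation of chain singularities: accumulation of pairwise disjoint connected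
components of the complement at `x` in Hausdorff distance is equivalent to the existence
of a chain sequence of singularities converging to `x`. -/
theorem characterisation_of_chain_singularities (E : Set Plane) (hE : IsCompact E)
    {ε : ℝ} (hε : 0 < ε) (x : Plane) (hx : x ∈ frontier (eNbhd E ε)) :
    (∃ Vs : ℕ → Set Plane, (∀ n, IsCompOfCompl E ε (Vs n)) ∧
      (Pairwise fun m n => Disjoint (Vs m) (Vs n)) ∧
      Tendsto (fun n => hausdorffDist {x} (Vs n)) atTop (nhds 0)) ↔
    (∃ u : ℕ → Plane, IsChainSeq E ε x u) :=
  (exists_congr fun _ => and_congr_right fun hVs => and_congr_right fun hdisj =>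
    tendsto_hausdorffDist_iff_tendsto_hausdorffEDist hE.isBounded hVs hdisj x).trans
    (characterisation_of_chain_singularities_general hE.isClosed hε x)

end
end

section
/- Let E ⊆ ℝ² be compact, ε > 0, and x ∈ ∂E_ε. Then x is smooth (i.e. x ∈ Unp(E) and ∂E_ε ∩ B_r(x) ⊆ Unp(E) for some r > 0) if and only if there exist δ > 0 and an injective continuously differentiable map γ : [0,1] → ℝ² with nowhere-vanishing derivative such that γ([0,1]) = ∂E_ε ∩ closed-ball(x, δ). -/
open Metric Set Filter Topology RealInnerProductSpace

noncomputable section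

/-!
The contributors of a boundary point `x` are its nearest points in `E`. Where the nearest point `y`
is unique, the squared distance to `E` has the strict derivative `2 (x - y)`: nearest points of
nearby points are close to `y`, so both increments of the squared distance are controlled by the
spheres about them. If uniqueness holds on the boundary near `x`, then there the boundary is a
regular level set of the distance and, by the inverse function theorem, a `C¹` arc.

Conversely, straighten a boundary arc near one of its points `z` into a coordinate axis. One of the
two sides is connected, misses the boundary and meets the complement of `E_ε`, hence lies outside
`E_ε`. The `ε`-ball about a contributor of `z` avoids this side, so it is tangent to the arc at `z`
from the other side, and this determines its centre.
-/

section Derivatives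

variable {𝕜 V W : Type*} [NontriviallyNormedField 𝕜] [NormedAddCommGroup V] [NormedSpace 𝕜 V]
  [NormedAddCommGroup W] [NormedSpace 𝕜 W] {f : V → W} {f' : V →L[𝕜] W} {x : V}

theorem eventually_mem_of_hasFDerivAt (hf : HasStrictFDerivAt f f' x) {s : Set (V →L[𝕜] W)}
    (hs : s ∈ 𝓝 f') : ∀ᶠ z in 𝓝 x, ∀ g : V →L[𝕜] W, HasFDerivAt f g z → g ∈ s := by
  obtain ⟨r, hr, hrs⟩ := Metric.nhds_basis_closedBall.mem_iff.1 hs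
  lift r to NNReal using hr.le
  obtain ⟨u, hu, happrox⟩ := hf.approximates_deriv_on_nhds (Or.inr hr)
  filter_upwards [eventually_mem_nhds_iff.2 hu] with z hz g hg
  exact hrs (mem_closedBall_iff_norm.2
    ((hg.sub f'.hasFDerivAt).le_of_lipschitzOn hz happrox.lipschitzOnWith))

theorem contDiffAt_one_of_eventually_hasStrictFDerivAt
    (hf : ∀ᶠ z in 𝓝 x, ∃ g : V →L[𝕜] W, HasStrictFDerivAt f g z) : ContDiffAt 𝕜 1 f x := by
  obtain ⟨u, hu, hfu⟩ := hf.exists_mem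
  have hderiv : ∀ z ∈ u, HasStrictFDerivAt f (fderiv 𝕜 f z) z := fun z hz ↦ by
    obtain ⟨g, hg⟩ := hfu z hz
    rwa [hg.hasFDerivAt.fderiv]
  refine contDiffAt_one_iff.2 ⟨fderiv 𝕜 f, u, hu, fun z hz s hs ↦ mem_map.2 ?_,
    fun z hz ↦ (hderiv z hz).hasFDerivAt⟩
  filter_upwards [mem_nhdsWithin_of_mem_nhds (eventually_mem_of_hasFDerivAt (hderiv z hz) hs),
    self_mem_nhdsWithin] with w hw hwu
  exact hw _ (hderiv w hwu).hasFDerivAt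

theorem eventually_map_nhds_eq_of_surj [CompleteSpace V] [CompleteSpace W]
    (hf : HasStrictFDerivAt f f' x) (h : f'.range = ⊤) :
    ∀ᶠ z in 𝓝 x, map f (𝓝 z) = 𝓝 (f z) := by
  let g := f'.nonlinearRightInverseOfSurjective h
  have hg : 0 < g.nnnorm⁻¹ := inv_pos.2 (f'.nonlinearRightInverseOfSurjective_nnnorm_pos h)
  obtain ⟨u, hu, happrox⟩ := hf.approximates_deriv_on_nhds (Or.inr (half_pos hg))
  filter_upwards [eventually_mem_nhds_iff.2 hu] with z hz
  exact happrox.map_nhds_eq g hz (Or.inr (NNReal.half_lt_self hg.ne'))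

theorem eventually_lt_of_hasFDerivAt_pos {V : Type*} [NormedAddCommGroup V] [NormedSpace ℝ V]
    {f : V → ℝ} {f' : V →L[ℝ] ℝ} {x v : V}
    (hf : HasFDerivAt f f' x) (hv : 0 < f' v) : ∀ᶠ t in 𝓝[>] (0 : ℝ), f x < f (x + t • v) := by
  have hslope := (hf.hasLineDerivAt v).tendsto_slope_zero_right
  filter_upwards [hslope.eventually_const_lt hv, self_mem_nhdsWithin] with t ht ht0
  exact sub_pos.1 ((pos_iff_pos_of_mul_pos ht).1 (inv_pos.2 ht0))

end Derivatives

theorem exists_Icc_eq_setOf_le {α β : Type*} [ConditionallyCompleteLinearOrder α]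
    [DenselyOrdered α] [TopologicalSpace α] [OrderTopology α] [LinearOrder β] [TopologicalSpace β]
    [OrderClosedTopology β] {f : α → β} {a m b : α} {r : β} (ham : a ≤ m) (hmb : m ≤ b)
    (hf : ContinuousOn f (Icc a b)) (hanti : StrictAntiOn f (Icc a m))
    (hmono : StrictMonoOn f (Icc m b)) (hm : f m < r) (ha : r ≤ f a) (hb : r ≤ f b) :
    ∃ s t, s < t ∧ {u ∈ Icc a b | f u ≤ r} = Icc s t := by
  obtain ⟨s, hs, rfl⟩ :=
    intermediate_value_Icc' ham (hf.mono (Icc_subset_Icc_right hmb)) ⟨hm.le, ha⟩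
  obtain ⟨t, ht, hst⟩ :=
    intermediate_value_Icc hmb (hf.mono (Icc_subset_Icc_left ham)) ⟨hm.le, hb⟩
  have hsm : s < m := hs.2.lt_of_ne (by rintro rfl; exact hm.false)
  have hmt : m < t := ht.1.lt_of_ne (by rintro rfl; exact (hst ▸ hm).false)
  refine ⟨s, t, hsm.trans hmt, ext fun u ↦ ⟨fun ⟨hu, hur⟩ ↦ ?_, fun hu ↦ ?_⟩⟩
  · rcases le_total u m with hum | hmu
    · exact ⟨(hanti.le_iff_ge ⟨hu.1, hum⟩ hs).1 hur, hum.trans hmt.le⟩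
    · exact ⟨hsm.le.trans hmu, (hmono.le_iff_le ⟨hmu, hu.2⟩ ht).1 (hst ▸ hur)⟩
  · refine ⟨⟨hs.1.trans hu.1, hu.2.trans ht.2⟩, ?_⟩
    rcases le_total u m with hum | hmu
    · exact hanti.antitoneOn hs ⟨hs.1.trans hu.1, hum⟩ hu.1
    · exact hst ▸ hmono.monotoneOn ⟨hmu, hu.2.trans ht.2⟩ ht hu.2

section Arcs

variable {V : Type*} [NormedAddCommGroup V] [NormedSpace ℝ V]

/-- A simple regular `C¹` arc: the image of `[0, 1]` under an injective `C¹` map whose derivative,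
one-sided at the endpoints, vanishes nowhere. It is the local model for the boundary of `E_ε` at a
smooth point. -/
def IsC1Arc (A : Set V) : Prop :=
  ∃ γ : ℝ → V, InjOn γ (Icc 0 1) ∧ ContDiffOn ℝ 1 γ (Icc 0 1) ∧
    (∀ t ∈ Icc (0 : ℝ) 1, derivWithin γ (Icc 0 1) t ≠ 0) ∧ γ '' Icc 0 1 = A

theorem isC1Arc_image_Icc {γ : ℝ → V} {a b : ℝ} (hab : a < b) (hinj : InjOn γ (Icc a b))
    (hγ : ∀ t ∈ Icc a b, ContDiffAt ℝ 1 γ t) (hderiv : ∀ t ∈ Icc a b, deriv γ t ≠ 0) :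
    IsC1Arc (γ '' Icc a b) := by
  have himage : AffineMap.lineMap a b '' Icc (0 : ℝ) 1 = Icc a b := by
    rw [← segment_eq_image_lineMap, segment_eq_Icc hab.le]
  have hmaps : MapsTo (AffineMap.lineMap a b) (Icc (0 : ℝ) 1) (Icc a b) :=
    mapsTo_iff_image_subset.2 himage.subset
  refine ⟨γ ∘ AffineMap.lineMap a b,
    hinj.comp (AffineMap.lineMap_injective ℝ hab.ne).injOn hmaps, fun t ht ↦ ?_, fun t ht ↦ ?_,
    by rw [image_comp, himage]⟩
  · have hline : ContDiff ℝ 1 (AffineMap.lineMap a b : ℝ → ℝ) :=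
      (ContinuousAffineMap.lineMap (R := ℝ) a b).contDiff
    exact ((hγ _ (hmaps ht)).comp t hline.contDiffAt).contDiffWithinAt
  · have hγt := ((hγ _ (hmaps ht)).differentiableAt one_ne_zero).hasDerivAt
    rw [(hγt.scomp t AffineMap.hasDerivAt_lineMap).hasDerivWithinAt.derivWithin
      (uniqueDiffOn_Icc_zero_one t ht)]
    exact smul_ne_zero (sub_ne_zero.2 hab.ne') (hderiv _ (hmaps ht))

theorem norm_lt_norm_of_norm_sub_smul_le {u u' g : V} {c h k : ℝ} (hc : 3 * c < ‖g‖)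
    (hhk : 0 ≤ h * k) (hk : k ≠ 0) (hu : ‖u - h • g‖ ≤ c * |h|)
    (hu' : ‖u' - u - k • g‖ ≤ c * |k|) : ‖u‖ < ‖u'‖ := by
  have hk0 : 0 < |k| := abs_pos.2 hk
  have hsmul (r : ℝ) (w : V) : ‖r • w‖ = |r| * ‖w‖ := norm_smul r w
  rcases eq_or_ne h 0 with rfl | hh
  · have hu0 : u = 0 := by simpa using hu
    have hlower := (norm_sub_norm_le (k • g) u').trans (norm_sub_rev _ _).le
    rw [hu0, sub_zero] at hu'
    rw [hsmul] at hlower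
    rw [hu0, norm_zero]
    nlinarith [norm_nonneg g]
  have hh0 : 0 < |h| := abs_pos.2 hh
  have hlower : |h| * ‖g‖ ≤ ‖u‖ + c * |h| := by
    rw [← hsmul]
    linarith [norm_sub_norm_le (h • g) u, norm_sub_rev (h • g) u]
  have hsame : |h + k| = |h| + |k| := abs_add_eq_add_abs_iff h k |>.2 (mul_nonneg_iff.1 hhk)
  -- Up to the errors, `u` is the point `(h / (h + k)) • u'` of the segment from `0` to `u'`.
  have hupper : (|h| + |k|) * ‖u‖ ≤ |h| * ‖u'‖ + |k| * (c * |h|) + |h| * (c * |k|) := by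
    calc (|h| + |k|) * ‖u‖ = ‖h • u' + k • (u - h • g) - h • (u' - u - k • g)‖ := by
          rw [← hsame, ← hsmul]
          congr 1
          module
      _ ≤ |h| * ‖u'‖ + |k| * ‖u - h • g‖ + |h| * ‖u' - u - k • g‖ := by
          simp only [← hsmul]
          exact (norm_sub_le _ _).trans (by gcongr; exact norm_add_le _ _)
      _ ≤ |h| * ‖u'‖ + |k| * (c * |h|) + |h| * (c * |k|) := by gcongr
  nlinarith [mul_pos hh0 hk0]

theorem eventually_dist_lt_dist_of_hasStrictDerivAt {γ : ℝ → V} {g : V} {a : ℝ}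
    (hγ : HasStrictDerivAt γ g a) (hg : g ≠ 0) :
    ∀ᶠ p : ℝ × ℝ in 𝓝 (a, a), p.1 ∈ uIcc a p.2 → p.1 ≠ p.2 →
      dist (γ p.1) (γ a) < dist (γ p.2) (γ a) := by
  have hc : 0 < ‖g‖ / 4 := by positivity
  have happrox : ∀ᶠ p : ℝ × ℝ in 𝓝 (a, a),
      ‖γ p.1 - γ p.2 - (p.1 - p.2) • g‖ ≤ ‖g‖ / 4 * |p.1 - p.2| :=
    hγ.isLittleO.def hc
  have hfst : Tendsto (fun p : ℝ × ℝ ↦ (p.1, a)) (𝓝 (a, a)) (𝓝 (a, a)) :=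
    Continuous.tendsto' (by fun_prop) _ _ rfl
  have hswap : Tendsto Prod.swap (𝓝 ((a, a) : ℝ × ℝ)) (𝓝 (a, a)) :=
    continuous_swap.tendsto _
  filter_upwards [hfst.eventually happrox, hswap.eventually happrox]
    with ⟨s, t⟩ hs hst hmem hne
  rw [dist_eq_norm, dist_eq_norm]
  refine norm_lt_norm_of_norm_sub_smul_le (k := t - s) (by linarith) ?_ (sub_ne_zero.2 hne.symm)
    hs ?_
  · rcases mem_uIcc.1 hmem with h | h <;> nlinarith
  · rwa [sub_sub_sub_cancel_right]

theorem eventually_setOf_dist_le_eq_Icc {γ : ℝ → V} {g : V} {a : ℝ}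
    (hγ : HasStrictDerivAt γ g a) (hg : g ≠ 0) :
    ∀ᶠ η in 𝓝[>] (0 : ℝ), ∀ᶠ δ in 𝓝[>] (0 : ℝ), ∃ s t, s < t ∧
      {u ∈ Icc (a - η) (a + η) | dist (γ u) (γ a) ≤ δ} = Icc s t := by
  obtain ⟨K, u, hu, hlip⟩ := hγ.hasStrictFDerivAt.exists_lipschitzOnWith
  have hradial := eventually_dist_lt_dist_of_hasStrictDerivAt hγ hg
  rw [nhds_prod_eq] at hradial
  obtain ⟨r, hr, hI⟩ := (nhds_basis_Icc_pos a).prod_self.mem_iff.1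
    (hradial.and (Eventually.prod_inl hu (𝓝 a)))
  filter_upwards [Ioc_mem_nhdsGT hr] with η ⟨hη, hηr⟩
  replace hI := (prod_mono (Icc_subset_Icc (sub_le_sub_left hηr a) (add_le_add_right hηr a))
    (Icc_subset_Icc (sub_le_sub_left hηr a) (add_le_add_right hηr a))).trans hI
  have ha : a - η ≤ a ∧ a ≤ a + η := ⟨by linarith, by linarith⟩
  have hcont : ContinuousOn (fun s ↦ dist (γ s) (γ a)) (Icc (a - η) (a + η)) :=
    (continuous_id.dist continuous_const).comp_continuousOn
      (hlip.continuousOn.mono fun s hs ↦ (hI (mk_mem_prod hs ha)).2)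
  have hanti : StrictAntiOn (fun s ↦ dist (γ s) (γ a)) (Icc (a - η) a) := fun s hs t ht hst ↦
    (hI (mk_mem_prod (a := t) (b := s) ⟨ht.1, ht.2.trans ha.2⟩ ⟨hs.1, hs.2.trans ha.2⟩)).1
      (mem_uIcc.2 (Or.inr ⟨hst.le, ht.2⟩)) hst.ne'
  have hmono : StrictMonoOn (fun s ↦ dist (γ s) (γ a)) (Icc a (a + η)) := fun s hs t ht hst ↦
    (hI (mk_mem_prod (a := s) (b := t) ⟨ha.1.trans hs.1, hs.2⟩ ⟨ha.1.trans ht.1, ht.2⟩)).1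
      (mem_uIcc.2 (Or.inl ⟨hs.1, hst.le⟩)) hst.ne
  have hleft : 0 < dist (γ (a - η)) (γ a) :=
    dist_nonneg.trans_lt (hanti ⟨le_rfl, ha.1⟩ ⟨ha.1, le_rfl⟩ (by linarith))
  have hright : 0 < dist (γ (a + η)) (γ a) :=
    dist_nonneg.trans_lt (hmono ⟨le_rfl, ha.2⟩ ⟨ha.2, le_rfl⟩ (by linarith))
  filter_upwards [Ioc_mem_nhdsGT hleft, Ioc_mem_nhdsGT hright] with δ ⟨hδ, hδleft⟩ ⟨_, hδright⟩
  exact exists_Icc_eq_setOf_le ha.1 ha.2 hcont hanti hmono ((dist_self _).trans_lt hδ)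
    hδleft hδright

theorem eventually_isC1Arc_inter_closedBall {γ : ℝ → V} {τ : V → ℝ} {F : Set V} {a : ℝ} {x : V}
    (hγ : ContDiffAt ℝ 1 γ a) (hderiv : deriv γ a ≠ 0) (hγa : γ a = x)
    (hτγ : ∀ᶠ s in 𝓝 a, τ (γ s) = s) (hγF : ∀ᶠ s in 𝓝 a, γ s ∈ F) (hτ : ContinuousAt τ x)
    (hγτ : ∀ᶠ z in 𝓝 x, z ∈ F → γ (τ z) = z) :
    ∀ᶠ δ in 𝓝[>] (0 : ℝ), IsC1Arc (F ∩ closedBall x δ) := by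
  subst hγa
  have hregular : ∀ᶠ s in 𝓝 a, ContDiffAt ℝ 1 γ s ∧ deriv γ s ≠ 0 ∧ τ (γ s) = s ∧ γ s ∈ F :=
    (hγ.eventually (by simp)).and (((hγ.derivWithin (m := 0) le_rfl).continuousAt.eventually_ne
      hderiv).and (hτγ.and hγF))
  obtain ⟨r, hr, hIr⟩ := (nhds_basis_Icc_pos a).mem_iff.1 hregular
  obtain ⟨η, harcs, hη, hηr⟩ := ((eventually_setOf_dist_le_eq_Icc
    (hγ.hasStrictDerivAt one_ne_zero) hderiv).and (Ioc_mem_nhdsGT hr)).exists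
  have hI := (Icc_subset_Icc (sub_le_sub_left hηr a) (add_le_add_right hηr a)).trans hIr
  have hchart : ∀ᶠ z in 𝓝 (γ a), (z ∈ F → γ (τ z) = z) ∧ τ z ∈ Icc (a - η) (a + η) :=
    hγτ.and (hτ (hτγ.self_of_nhds.symm ▸
      Icc_mem_nhds (sub_lt_self a hη) (lt_add_of_pos_right a hη)))
  obtain ⟨δ₀, hδ₀, hball⟩ := Metric.nhds_basis_closedBall.mem_iff.1 hchart
  filter_upwards [Ioc_mem_nhdsGT hδ₀, harcs] with δ ⟨_, hδδ₀⟩ ⟨s, t, hst, hIcc⟩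
  have hsub : Icc s t ⊆ Icc (a - η) (a + η) := hIcc ▸ sep_subset _ _
  have himage : γ '' Icc s t = F ∩ closedBall (γ a) δ := by
    rw [← hIcc]
    refine Subset.antisymm (image_subset_iff.2 fun u hu ↦ ⟨(hI hu.1).2.2.2, hu.2⟩) ?_
    rintro z ⟨hzF, hz⟩
    obtain ⟨hγz, hτz⟩ := hball (closedBall_subset_closedBall hδδ₀ hz)
    exact ⟨τ z, ⟨hτz, by rwa [hγz hzF]⟩, hγz hzF⟩
  rw [← himage]
  exact isC1Arc_image_Icc hst
    ((LeftInvOn.injOn fun u hu ↦ (hI hu).2.2.1).mono hsub)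
    (fun u hu ↦ (hI (hsub hu)).1) (fun u hu ↦ (hI (hsub hu)).2.1)

end Arcs

section LevelSets

theorem exists_continuousLinearEquiv_prod {𝕜 V : Type*} [NontriviallyNormedField 𝕜]
    [CompleteSpace 𝕜] [NormedAddCommGroup V] [NormedSpace 𝕜 V] (hV : Module.finrank 𝕜 V = 2)
    {ℓ : V →L[𝕜] 𝕜} {v : V} (hℓ : ℓ v = 1) :
    ∃ (τ : V →L[𝕜] 𝕜) (e : V ≃L[𝕜] 𝕜 × 𝕜), (e : V →L[𝕜] 𝕜 × 𝕜) = ℓ.prod τ ∧ e v = (1, 0) := by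
  have : FiniteDimensional 𝕜 V := Module.finite_of_finrank_eq_succ hV
  have hinv : Function.RightInverse (ContinuousLinearMap.toSpanSingleton 𝕜 v) ℓ := fun t ↦ by
    simp [hℓ]
  let e₁ := ContinuousLinearEquiv.equivOfRightInverse ℓ (.toSpanSingleton 𝕜 v) hinv
  have hker : Module.finrank 𝕜 ℓ.ker = 1 := by
    have h := e₁.toLinearEquiv.finrank_eq
    rw [Module.finrank_prod, Module.finrank_self, hV] at h
    omega
  let e₂ : ℓ.ker ≃L[𝕜] 𝕜 := .ofFinrankEq (hker.trans (Module.finrank_self 𝕜).symm)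
  let e := e₁.trans ((ContinuousLinearEquiv.refl 𝕜 𝕜).prodCongr e₂)
  refine ⟨(ContinuousLinearMap.snd 𝕜 𝕜 𝕜).comp (e : V →L[𝕜] 𝕜 × 𝕜), e, rfl, ?_⟩
  have hev : e₁ v = (1, 0) := Prod.ext hℓ (Subtype.ext (by simp [e₁, hℓ]))
  simp [e, hev]

theorem eventually_exists_hasStrictDerivAt_symm {𝕜 V W : Type*} [NontriviallyNormedField 𝕜]
    [NormedAddCommGroup V] [NormedSpace 𝕜 V] [CompleteSpace V] [NormedAddCommGroup W]
    [NormedSpace 𝕜 W] {H : OpenPartialHomeomorph V (W × 𝕜)} {e : V ≃L[𝕜] W × 𝕜} {x : V}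
    (hx : HasStrictFDerivAt H (e : V →L[𝕜] W × 𝕜) x) (hxH : x ∈ H.source)
    (hslice : ∀ᶠ z in 𝓝 x, (H z).1 = (H x).1 → ∃ g : V →L[𝕜] W × 𝕜, HasStrictFDerivAt H g z) :
    ∀ᶠ s in 𝓝 (H x).2, ∃ e' : V ≃L[𝕜] W × 𝕜,
      HasStrictDerivAt (fun s ↦ H.symm ((H x).1, s)) (e'.symm (0, 1)) s := by
  have hline (s : 𝕜) : HasStrictDerivAt (fun s : 𝕜 ↦ ((H x).1, s)) (0, 1) s :=
    (hasStrictDerivAt_const s (H x).1).prodMk (hasStrictDerivAt_id s)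
  have hcont := (hline (H x).2).hasDerivAt.continuousAt
  have hγ : Tendsto (fun s ↦ H.symm ((H x).1, s)) (𝓝 (H x).2) (𝓝 x) :=
    (H.tendsto_symm hxH).comp hcont
  filter_upwards [hcont.eventually (H.open_target.mem_nhds (H.map_source hxH)),
    hγ.eventually hslice, hγ.eventually (eventually_mem_of_hasFDerivAt hx e.nhds)]
    with s hs hslice hequiv
  obtain ⟨g, hg⟩ := hslice (Prod.ext_iff.1 (H.right_inv hs)).1
  obtain ⟨e', rfl⟩ := hequiv g hg.hasFDerivAt
  exact ⟨e', (H.hasStrictFDerivAt_symm hs hg).comp_hasStrictDerivAt s (hline s)⟩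

theorem eventually_isC1Arc_levelSet {V : Type*} [NormedAddCommGroup V] [NormedSpace ℝ V]
    (hV : Module.finrank ℝ V = 2) {f : V → ℝ} {f' : V →L[ℝ] ℝ} {x : V}
    (hf : HasStrictFDerivAt f f' x) (hf' : f' ≠ 0)
    (hlevel : ∀ᶠ z in 𝓝 x, f z = f x → ∃ g : V →L[ℝ] ℝ, HasStrictFDerivAt f g z) :
    ∀ᶠ δ in 𝓝[>] (0 : ℝ), IsC1Arc ({z | f z = f x} ∩ closedBall x δ) := by
  have : FiniteDimensional ℝ V := Module.finite_of_finrank_eq_succ hV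
  have : CompleteSpace V := FiniteDimensional.complete ℝ V
  obtain ⟨w, hw⟩ : ∃ w, f' w ≠ 0 := DFunLike.ne_iff.1 hf'
  obtain ⟨τ, e, he, -⟩ := exists_continuousLinearEquiv_prod hV
    (show f' ((f' w)⁻¹ • w) = 1 by simp [hw])
  -- `(f, τ)` is a chart straightening the level set into the slice `{f x} × ℝ`.
  have hchart {z : V} {g : V →L[ℝ] ℝ} (hg : HasStrictFDerivAt f g z) :
      HasStrictFDerivAt (fun p ↦ (f p, τ p)) (g.prod τ) z := hg.prodMk τ.hasStrictFDerivAt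
  have hx : HasStrictFDerivAt (fun p ↦ (f p, τ p)) (e : V →L[ℝ] ℝ × ℝ) x := he ▸ hchart hf
  let H := hx.toOpenPartialHomeomorph
  have hxH : x ∈ H.source := hx.mem_toOpenPartialHomeomorph_source
  have htarget : ∀ᶠ s in 𝓝 (τ x), (f x, s) ∈ H.target :=
    (Continuous.prodMk_right (f x)).continuousAt (H.open_target.mem_nhds (H.map_source hxH))
  have hslice {s : ℝ} (hs : (f x, s) ∈ H.target) :
      f (H.symm (f x, s)) = f x ∧ τ (H.symm (f x, s)) = s := Prod.ext_iff.1 (H.right_inv hs)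
  have hstrict : ∀ᶠ s in 𝓝 (τ x), ∃ e' : V ≃L[ℝ] ℝ × ℝ,
      HasStrictDerivAt (fun s ↦ H.symm (f x, s)) (e'.symm (0, 1)) s :=
    eventually_exists_hasStrictDerivAt_symm (H := H) hx hxH
      (hlevel.mono fun z h hz ↦ (h hz).imp' (·.prod τ) fun g ↦ hchart)
  obtain ⟨e', hderiv⟩ := hstrict.self_of_nhds
  refine eventually_isC1Arc_inter_closedBall (τ := τ)
    (contDiffAt_one_of_eventually_hasStrictFDerivAt
      (hstrict.mono fun s ⟨_, hs⟩ ↦ ⟨_, hs.hasStrictFDerivAt⟩))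
    (by simp [hderiv.hasDerivAt.deriv]) (H.left_inv hxH) (htarget.mono fun s hs ↦ (hslice hs).2)
    (htarget.mono fun s hs ↦ (hslice hs).1) τ.continuous.continuousAt ?_
  filter_upwards [H.eventually_left_inverse hxH] with z hz hzF
  rwa [← show f z = f x from hzF]
end LevelSets

section MetricProjection

/-- The metric projection of `z` onto `E`: the points of the closure of `E` nearest to `z`.
Taking the closure leaves the distance unchanged and makes nearest points exist in proper spaces. -/
def metricProj {X : Type*} [PseudoMetricSpace X] (E : Set X) (z : X) : Set X :=
  {q ∈ closure E | dist z q = infDist z E}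

theorem metricProj_nonempty {X : Type*} [PseudoMetricSpace X] [ProperSpace X] {E : Set X}
    (hE : E.Nonempty) (z : X) : (metricProj E z).Nonempty :=
  let ⟨q, hq, hdist⟩ := exists_mem_closure_infDist_eq_dist hE z
  ⟨q, hq, hdist.symm⟩

theorem eventually_metricProj_subset {X : Type*} [PseudoMetricSpace X] [ProperSpace X]
    {E U : Set X} {z : X} (hU : IsOpen U) (hz : metricProj E z ⊆ U) :
    ∀ᶠ p in 𝓝 z, metricProj E p ⊆ U := by
  rcases (closure E \ U).eq_empty_or_nonempty with hempty | hne
  · exact .of_forall fun p ↦ (sep_subset _ _).trans (sdiff_eq_empty.1 hempty)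
  have hfar : infDist z E < infDist z (closure E \ U) := by
    obtain ⟨q, ⟨hqE, hqU⟩, hq⟩ := (isClosed_closure.sdiff hU).exists_infDist_eq_dist hne z
    rw [hq]
    refine lt_of_le_of_ne ?_ fun h ↦ hqU (hz ⟨hqE, h.symm⟩)
    exact infDist_closure (s := E) ▸ infDist_le_dist_of_mem hqE
  filter_upwards [(continuous_infDist_pt E).continuousAt.eventually_lt
    (continuous_infDist_pt (closure E \ U)).continuousAt hfar] with p hp q ⟨hqE, hq⟩
  by_contra hqU
  exact hp.not_ge (hq ▸ infDist_le_dist_of_mem ⟨hqE, hqU⟩)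

theorem metricProj_subset_frontier {V : Type*} [NormedAddCommGroup V] [NormedSpace ℝ V]
    {E : Set V} {z : V} (hz : 0 < infDist z E) : metricProj E z ⊆ frontier E := by
  rintro q ⟨hqE, hq⟩
  refine ⟨hqE, fun hqint ↦ ?_⟩
  have hqball : q ∈ closure (ball z (infDist z E)) := by
    rw [closure_ball z hz.ne', mem_closedBall', hq]
  obtain ⟨p, hp, hpE⟩ := mem_closure_iff.1 hqball _ isOpen_interior hqint
  exact disjoint_left.1 disjoint_ball_infDist hpE (interior_subset hp)

theorem hasStrictFDerivAt_of_eventually_sub_le {V : Type*} [NormedAddCommGroup V]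
    [NormedSpace ℝ V] {f : V → ℝ} {f' : V →L[ℝ] ℝ} {x : V}
    (h : ∀ c > 0, ∀ᶠ p : V × V in 𝓝 (x, x),
      f p.1 - f p.2 - f' (p.1 - p.2) ≤ c * ‖p.1 - p.2‖) : HasStrictFDerivAt f f' x := by
  refine .of_isLittleO (Asymptotics.IsLittleO.of_bound fun c hc ↦ ?_)
  have hswap : Tendsto Prod.swap (𝓝 ((x, x) : V × V)) (𝓝 (x, x)) := continuous_swap.tendsto _
  filter_upwards [h c hc, hswap.eventually (h c hc)] with ⟨p, q⟩ hpq hqp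
  simp only [Prod.swap_prod_mk, norm_sub_rev q p] at hqp
  rw [← neg_sub p q, map_neg] at hqp
  exact abs_le.2 ⟨by linarith, hpq⟩

variable {V : Type*} [NormedAddCommGroup V] [InnerProductSpace ℝ V] {E : Set V} {z y : V}

theorem infDist_sq_sub_infDist_sq_le {q : V} (hq : q ∈ metricProj E z) (p : V) :
    infDist p E ^ 2 - infDist z E ^ 2 ≤ 2 * ⟪z - q, p - z⟫ + ‖p - z‖ ^ 2 := by
  have hle : infDist p E ≤ ‖p - q‖ := by
    rw [← dist_eq_norm, ← infDist_closure]
    exact infDist_le_dist_of_mem hq.1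
  rw [← hq.2, dist_eq_norm]
  have hexpand : ‖p - q‖ ^ 2 = ‖z - q‖ ^ 2 + 2 * ⟪z - q, p - z⟫ + ‖p - z‖ ^ 2 := by
    rw [← norm_add_sq_real, sub_add_sub_comm, add_comm z, add_sub_add_right_eq_sub]
  linarith [pow_le_pow_left₀ infDist_nonneg hle 2]

theorem hasStrictFDerivAt_infDist_sq [ProperSpace V] (h : metricProj E z = {y}) :
    HasStrictFDerivAt (fun p ↦ infDist p E ^ 2) (2 • innerSL ℝ (z - y)) z := by
  have hE : E.Nonempty := closure_nonempty_iff.1 ⟨y, (h.symm.subset rfl).1⟩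
  refine hasStrictFDerivAt_of_eventually_sub_le fun c hc ↦ ?_
  have hproj : ∀ᶠ p in 𝓝 z, metricProj E p ⊆ ball y (c / 8) :=
    eventually_metricProj_subset isOpen_ball (by simp [h, hc])
  have hnear : ∀ᶠ p in 𝓝 z, p ∈ ball z (c / 8) := ball_mem_nhds z (by positivity)
  rw [nhds_prod_eq]
  filter_upwards [hnear.prod_mk (hproj.and hnear)] with ⟨p, p'⟩ ⟨hp, hp'proj, hp'⟩
  obtain ⟨q, hq⟩ := metricProj_nonempty hE p'
  have hqy := hp'proj hq
  rw [mem_ball, dist_eq_norm] at hp hp' hqy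
  have hinner : ⟪p' - q, p - p'⟫ - ⟪z - y, p - p'⟫ ≤ c / 4 * ‖p - p'‖ := by
    rw [← inner_sub_left]
    refine (real_inner_le_norm _ _).trans (mul_le_mul_of_nonneg_right ?_ (norm_nonneg _))
    calc ‖p' - q - (z - y)‖ = ‖(p' - z) - (q - y)‖ := by congr 1; abel
      _ ≤ c / 4 := (norm_sub_le _ _).trans (by linarith)
  have hsq : ‖p - p'‖ ^ 2 ≤ c / 4 * ‖p - p'‖ := by
    rw [sq]
    refine mul_le_mul_of_nonneg_right ?_ (norm_nonneg _)
    calc ‖p - p'‖ = ‖(p - z) - (p' - z)‖ := by congr 1; abel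
      _ ≤ c / 4 := (norm_sub_le _ _).trans (by linarith)
  have hlinear : (2 • innerSL ℝ (z - y)) (p - p') = 2 * ⟪z - y, p - p'⟫ := by
    simp [inner_sub_left]
  rw [hlinear]
  nlinarith [infDist_sq_sub_infDist_sq_le hq p, norm_nonneg (p - p')]

theorem hasStrictFDerivAt_infDist [ProperSpace V] (h : metricProj E z = {y})
    (hz : 0 < infDist z E) :
    HasStrictFDerivAt (fun p ↦ infDist p E) ((infDist z E)⁻¹ • innerSL ℝ (z - y)) z := by
  convert! (hasStrictFDerivAt_infDist_sq h).sqrt (pow_ne_zero 2 hz.ne') using 1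
  · ext p
    rw [Real.sqrt_sq infDist_nonneg]
  · rw [Real.sqrt_sq infDist_nonneg]
    ext w
    simp only [map_sub, smul_apply, sub_apply, coe_innerSL_apply, smul_eq_mul, one_div,
      mul_inv_rev, nsmul_eq_mul, Nat.cast_ofNat]
    field_simp

theorem exists_ne_zero_hasStrictFDerivAt_infDist [ProperSpace V] (h : metricProj E z = {y})
    (hz : 0 < infDist z E) :
    ∃ f' : V →L[ℝ] ℝ, f' ≠ 0 ∧ HasStrictFDerivAt (infDist · E) f' z := by
  refine ⟨_, smul_ne_zero (inv_ne_zero hz.ne') (norm_ne_zero_iff.1 ?_),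
    hasStrictFDerivAt_infDist h hz⟩
  rw [innerSL_apply_norm, ← dist_eq_norm, (h.symm.subset rfl).2]
  exact hz.ne'

end MetricProjection

section FrontierOfThickening

theorem infDist_eq_of_mem_frontier_cthickening {X : Type*} [PseudoMetricSpace X] {E : Set X}
    {ε : ℝ} (hε : 0 ≤ ε) {z : X} (hz : z ∈ frontier (cthickening ε E)) : infDist z E = ε := by
  rw [infDist, frontier_cthickening_subset E hz, ENNReal.toReal_ofReal hε]

theorem mem_frontier_cthickening_of_map_nhds_eq {X : Type*} [PseudoMetricSpace X] {E : Set X}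
    (hE : E.Nonempty) {z : X} (hz : map (infDist · E) (𝓝 z) = 𝓝 (infDist z E)) :
    z ∈ frontier (cthickening (infDist z E) E) := by
  have hmem (p : X) : p ∈ cthickening (infDist z E) E ↔ infDist p E ≤ infDist z E := by
    rw [mem_cthickening_iff, ← ENNReal.ofReal_toReal (infEDist_ne_top hE (x := p)),
      ENNReal.ofReal_le_ofReal_iff infDist_nonneg]
    rfl
  rw [isClosed_cthickening.frontier_eq]
  refine ⟨(hmem z).2 le_rfl, fun hint ↦ ?_⟩
  have hIic : Iic (infDist z E) ∈ map (infDist · E) (𝓝 z) := by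
    rw [mem_map]
    filter_upwards [mem_interior_iff_mem_nhds.1 hint] with p hp using (hmem p).1 hp
  rw [hz, ← mem_interior_iff_mem_nhds, interior_Iic] at hIic
  exact lt_irrefl _ (mem_Iio.1 hIic)

variable {V : Type*} [NormedAddCommGroup V] [InnerProductSpace ℝ V] [ProperSpace V]
  {E : Set V} {ε : ℝ} {x y : V}

theorem eventually_mem_frontier_cthickening_iff (hε : 0 < ε) (hx : infDist x E = ε)
    (h : metricProj E x = {y}) :
    ∀ᶠ z in 𝓝 x, z ∈ frontier (cthickening ε E) ↔ infDist z E = ε := by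
  have hE : E.Nonempty := closure_nonempty_iff.1 ⟨y, (h.symm.subset rfl).1⟩
  obtain ⟨f', hf', hderiv⟩ := exists_ne_zero_hasStrictFDerivAt_infDist h (hx ▸ hε)
  have hsurj : f'.range = ⊤ :=
    LinearMap.range_eq_top.2 (LinearMap.surjective (by exact_mod_cast hf'))
  filter_upwards [eventually_map_nhds_eq_of_surj hderiv hsurj] with z hz
  refine ⟨infDist_eq_of_mem_frontier_cthickening hε.le, ?_⟩
  rintro rfl
  exact mem_frontier_cthickening_of_map_nhds_eq hE hz

theorem eventually_isC1Arc_frontier_cthickening (hV : Module.finrank ℝ V = 2) (hε : 0 < ε)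
    (hx : x ∈ frontier (cthickening ε E))
    (huniq : ∀ᶠ z in 𝓝 x, z ∈ frontier (cthickening ε E) → ∃ y, metricProj E z = {y}) :
    ∀ᶠ δ in 𝓝[>] (0 : ℝ), IsC1Arc (frontier (cthickening ε E) ∩ closedBall x δ) := by
  obtain ⟨y, hy⟩ := huniq.self_of_nhds hx
  have hdist : infDist x E = ε := infDist_eq_of_mem_frontier_cthickening hε.le hx
  have hfrontier := eventually_mem_frontier_cthickening_iff hε hdist hy
  have hlevel : ∀ᶠ z in 𝓝 x, infDist z E = infDist x E →
      ∃ g : V →L[ℝ] ℝ, HasStrictFDerivAt (infDist · E) g z := by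
    filter_upwards [hfrontier, huniq] with z hz hproj hzx
    obtain ⟨w, hw⟩ := hproj (hz.2 (hzx.trans hdist))
    obtain ⟨g, -, hg⟩ := exists_ne_zero_hasStrictFDerivAt_infDist hw (by linarith)
    exact ⟨g, hg⟩
  obtain ⟨r, hr, hball⟩ := Metric.nhds_basis_closedBall.mem_iff.1 hfrontier
  obtain ⟨f', hf', hderiv⟩ := exists_ne_zero_hasStrictFDerivAt_infDist hy (hdist ▸ hε)
  filter_upwards [eventually_isC1Arc_levelSet hV hderiv hf' hlevel, Ioc_mem_nhdsGT hr]
    with δ harc ⟨_, hδr⟩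
  convert! harc using 1
  ext z
  refine and_congr_left fun hz ↦ ?_
  rw [mem_ofPred_eq, hdist]
  exact hball (closedBall_subset_closedBall hδr hz)

end FrontierOfThickening

section Straightening

theorem exists_contDiff_eqOn_Icc {V : Type*} [NormedAddCommGroup V] [NormedSpace ℝ V]
    [CompleteSpace V] {γ : ℝ → V} {a b : ℝ} (hab : a < b) (hγ : ContDiffOn ℝ 1 γ (Icc a b)) :
    ∃ σ : ℝ → V, ContDiff ℝ 1 σ ∧ EqOn σ γ (Icc a b) := by
  obtain ⟨hdiff, hcont⟩ := (contDiffOn_one_iff_derivWithin (uniqueDiffOn_Icc hab)).1 hγ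
  let g : ℝ → V := IccExtend hab.le ((Icc a b).domRestrict (derivWithin γ (Icc a b)))
  have hg : Continuous g := hcont.domRestrict.Icc_extend'
  have hgγ : ∀ t ∈ Ioo a b, HasDerivAt γ (g t) t := fun t ht ↦ by
    have hmem := Ioo_subset_Icc_self ht
    rw [show g t = derivWithin γ (Icc a b) t from IccExtend_of_mem hab.le _ hmem]
    exact (hdiff t hmem).hasDerivWithinAt.hasDerivAt (Icc_mem_nhds ht.1 ht.2)
  have hderiv (t : ℝ) : HasDerivAt (fun t ↦ γ a + ∫ u in a..t, g u) (g t) t :=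
    (intervalIntegral.integral_hasDerivAt_right (hg.intervalIntegrable a t)
      (hg.stronglyMeasurableAtFilter _ _) hg.continuousAt).const_add (γ a)
  refine ⟨fun t ↦ γ a + ∫ u in a..t, g u, contDiff_one_iff_deriv.2
    ⟨fun t ↦ (hderiv t).differentiableAt, ?_⟩, fun t ht ↦ ?_⟩
  · rwa [funext fun t ↦ (hderiv t).deriv]
  · change γ a + ∫ u in a..t, g u = γ t
    rw [intervalIntegral.integral_eq_sub_of_hasDeriv_right_of_le ht.1
      (hγ.continuousOn.mono (Icc_subset_Icc_right ht.2))
      (fun s hs ↦ (hgγ s ⟨hs.1, hs.2.trans_le ht.2⟩).hasDerivWithinAt)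
      (hg.intervalIntegrable a t), add_sub_cancel]

theorem eventually_mem_image_inter_of_mem_image {X Y : Type*} [TopologicalSpace X]
    [TopologicalSpace Y] [T2Space Y] {γ : X → Y} {K U : Set X} {t : X} (hK : IsCompact K)
    (hγ : ContinuousOn γ K) (hinj : InjOn γ K) (ht : t ∈ K) (hU : U ∈ 𝓝 t) :
    ∀ᶠ p in 𝓝 (γ t), p ∈ γ '' K → p ∈ γ '' (K ∩ U) := by
  have hcompact : IsCompact (γ '' (K \ interior U)) :=
    (hK.diff isOpen_interior).image_of_continuousOn (hγ.mono sdiff_subset)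
  have hnotMem : γ t ∉ γ '' (K \ interior U) := by
    rintro ⟨s, ⟨hsK, hsU⟩, hs⟩
    exact hsU (hinj hsK ht hs ▸ mem_interior_iff_mem_nhds.2 hU)
  filter_upwards [hcompact.isClosed.isOpen_compl.mem_nhds hnotMem]
  rintro _ hp ⟨s, hs, rfl⟩
  exact ⟨s, ⟨hs, interior_subset (by_contra fun hsU ↦ hp ⟨s, ⟨hs, hsU⟩, rfl⟩)⟩, rfl⟩

theorem IsC1Arc.exists_straightening {V : Type*} [NormedAddCommGroup V] [NormedSpace ℝ V]
    (hV : Module.finrank ℝ V = 2) {A : Set V} (hA : IsC1Arc A) {z : V} (hz : z ∈ A) :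
    ∃ (H : OpenPartialHomeomorph V (ℝ × ℝ)) (h' : V ≃L[ℝ] ℝ × ℝ), z ∈ H.source ∧
      HasStrictFDerivAt H (h' : V →L[ℝ] ℝ × ℝ) z ∧ ∀ᶠ p in 𝓝 z, p ∈ A → (H p).2 = 0 := by
  have : FiniteDimensional ℝ V := Module.finite_of_finrank_eq_succ hV
  have : CompleteSpace V := FiniteDimensional.complete ℝ V
  obtain ⟨γ, hinj, hγ, hderiv, rfl⟩ := hA
  obtain ⟨t₀, ht₀, rfl⟩ := hz
  obtain ⟨σ, hσ, hσγ⟩ := exists_contDiff_eqOn_Icc one_pos hγ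
  have hv : deriv σ t₀ ≠ 0 := by
    rw [← (hσ.differentiable one_ne_zero t₀).derivWithin (uniqueDiffOn_Icc_zero_one t₀ ht₀),
      derivWithin_congr hσγ (hσγ ht₀)]
    exact hderiv t₀ ht₀
  obtain ⟨ℓ, hℓ⟩ := SeparatingDual.exists_eq_one (R := ℝ) hv
  obtain ⟨τ, e, -, he⟩ := exists_continuousLinearEquiv_prod hV hℓ
  have hσ' : HasStrictDerivAt σ (deriv σ t₀) t₀ := hσ.contDiffAt.hasStrictDerivAt one_ne_zero
  have he' : e.symm (1, 0) = deriv σ t₀ := e.symm_apply_eq.2 he.symm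
  have hΨ : HasStrictFDerivAt (fun p : ℝ × ℝ ↦ σ p.1 + p.2 • e.symm (0, 1))
      (e.symm : ℝ × ℝ →L[ℝ] V) (t₀, 0) := by
    convert! (hσ'.hasStrictFDerivAt.comp (t₀, (0 : ℝ)) hasStrictFDerivAt_fst).add
      (HasStrictFDerivAt.smul_const (hasStrictFDerivAt_snd (𝕜 := ℝ) (p := (t₀, (0 : ℝ))))
        (e.symm (0, 1))) using 1
    ext <;> simp [he']
  let H := hΨ.toOpenPartialHomeomorph
  have hsource : (t₀, 0) ∈ H.source := hΨ.mem_toOpenPartialHomeomorph_source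
  have hHσ (t : ℝ) : H (t, 0) = σ t := by simp [H]
  have hHγ : H (t₀, 0) = γ t₀ := (hHσ t₀).trans (hσγ ht₀)
  have htarget : γ t₀ ∈ H.target := hHγ ▸ H.map_source hsource
  refine ⟨H.symm, e, htarget, ?_, ?_⟩
  · refine H.hasStrictFDerivAt_symm (f' := e.symm) htarget ?_
    rwa [← hHγ, H.left_inv hsource]
  · have hU : {t | (t, (0 : ℝ)) ∈ H.source} ∈ 𝓝 t₀ :=
      (Continuous.prodMk_left (0 : ℝ)).continuousAt (H.open_source.mem_nhds hsource)
    filter_upwards [eventually_mem_image_inter_of_mem_image isCompact_Icc hγ.continuousOn hinj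
      ht₀ hU] with p hp hpA
    obtain ⟨t, ⟨htI, ht⟩, rfl⟩ := hp hpA
    rw [← hσγ htI, ← hHσ, H.left_inv ht]

end Straightening

section Sides

theorem subset_compl_of_isPreconnected {X : Type*} [TopologicalSpace X] {C T : Set X}
    (hC : IsClosed C) (hT : IsPreconnected T) (hfrontier : Disjoint T (frontier C))
    (hne : (T ∩ Cᶜ).Nonempty) : T ⊆ Cᶜ := by
  refine hT.subset_right_of_subset_union isOpen_interior hC.isOpen_compl
    (disjoint_compl_right.mono_left interior_subset) (fun p hp ↦ ?_) hne
  by_contra hpC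
  rw [mem_union, mem_compl_iff, not_or, not_not] at hpC
  exact disjoint_left.1 hfrontier hp (hC.frontier_eq ▸ ⟨hpC.2, hpC.1⟩)

variable {X : Type*} [TopologicalSpace X] {C : Set X} {z : X}

theorem frequently_notMem_and_snd_ne_zero {Y : Type*} [TopologicalSpace Y]
    {H : OpenPartialHomeomorph X (Y × ℝ)} (hC : IsClosed C)
    (hz : z ∈ frontier C) (hzH : z ∈ H.source) : ∃ᶠ p in 𝓝 z, p ∉ C ∧ (H p).2 ≠ 0 := by
  have hcompl : ∃ᶠ p in 𝓝 z, p ∉ C := by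
    rw [frontier_eq_closure_inter_closure] at hz
    exact mem_closure_iff_frequently.1 hz.2
  refine frequently_frequently_nhds.1 ((hcompl.and_eventually
    (H.open_source.mem_nhds hzH)).mono fun p ⟨hpC, hpH⟩ ↦ ?_)
  have hdense : Dense {q : Y × ℝ | q.2 ≠ 0} :=
    (dense_compl_singleton (0 : ℝ)).preimage isOpenMap_snd
  have hne : ∃ᶠ p' in 𝓝 p, (H p').2 ≠ 0 := by
    have := mem_closure_iff_frequently.1 (hdense (H p))
    rwa [← H.map_nhds_eq hpH, frequently_map] at this
  exact (hne.and_eventually (hC.isOpen_compl.mem_nhds hpC)).mono fun _ h ↦ h.symm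

theorem exists_eventually_notMem_of_pos {F : Type*} [SeminormedAddCommGroup F] [NormedSpace ℝ F]
    {H : OpenPartialHomeomorph X (F × ℝ)} (hC : IsClosed C) (hz : z ∈ frontier C)
    (hzH : z ∈ H.source) (hfrontier : ∀ᶠ p in 𝓝 z, p ∈ frontier C → (H p).2 = 0) :
    ∃ c : ℝ, c ≠ 0 ∧ ∀ᶠ p in 𝓝 z, 0 < c * (H p).2 → p ∉ C := by
  obtain ⟨c, hc, hside⟩ : ∃ c : ℝ, c ≠ 0 ∧ ∃ᶠ p in 𝓝 z, p ∉ C ∧ 0 < c * (H p).2 := by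
    rcases frequently_or_distrib.1 ((frequently_notMem_and_snd_ne_zero hC hz hzH).mono
      fun p ⟨hp, hne⟩ ↦ hne.lt_or_gt.imp (And.intro hp) (And.intro hp)) with hneg | hpos
    · exact ⟨-1, by norm_num, by simpa using hneg⟩
    · exact ⟨1, one_ne_zero, by simpa using hpos⟩
  refine ⟨c, hc, ?_⟩
  have hbox : ∀ᶠ q in 𝓝 (H z), q ∈ H.target ∧ (H.symm q ∈ frontier C → q.2 = 0) := by
    have htarget := H.open_target.mem_nhds (H.map_source hzH)
    filter_upwards [htarget, (H.tendsto_symm hzH).eventually hfrontier] with q hq hqC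
    exact ⟨hq, by rwa [H.right_inv hq] at hqC⟩
  obtain ⟨r, hr, hball⟩ := Metric.mem_nhds_iff.1 hbox
  let T := ball (H z) r ∩ {q | 0 < c * q.2}
  have hT : Convex ℝ T := (convex_ball _ _).inter
    (convex_halfSpace_gt (IsLinearMap.mk (by simp [mul_add]) (by simp [mul_left_comm])) 0)
  have hmem : ∀ᶠ p in 𝓝 z, 0 < c * (H p).2 → p ∈ H.symm '' T := by
    filter_upwards [H.open_source.mem_nhds hzH, (H.continuousAt hzH).eventually_mem
      (ball_mem_nhds _ hr)] with p hp hpr hpos using ⟨H p, ⟨hpr, hpos⟩, H.left_inv hp⟩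
  have hTC : H.symm '' T ⊆ Cᶜ := by
    refine subset_compl_of_isPreconnected hC (hT.isPreconnected.image _
      (H.continuousOn_symm.mono fun q hq ↦ (hball hq.1).1)) (disjoint_left.2 ?_) ?_
    · rintro _ ⟨q, ⟨hqr, hqpos⟩, rfl⟩ hqC
      exact (right_ne_zero_of_mul (ne_of_gt hqpos)) ((hball hqr).2 hqC)
    · obtain ⟨p, ⟨hpC, hpos⟩, hpT⟩ := (hside.and_eventually hmem).exists
      exact ⟨p, hpT hpos, hpC⟩
  exact hmem.mono fun p hp hpos ↦ hTC (hp hpos)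

end Sides

section Tangency

variable {V : Type*} [NormedAddCommGroup V] [InnerProductSpace ℝ V]

theorem norm_smul_eq_neg_norm_smul {a n : V} (h : ∀ w, 0 < ⟪a, w⟫ → ⟪n, w⟫ ≤ 0) :
    ‖n‖ • a = -(‖a‖ • n) := by
  rw [eq_neg_iff_add_eq_zero]
  by_contra hne
  set w := ‖n‖ • a + ‖a‖ • n with hw
  have haw : ⟪a, w⟫ = ‖a‖ * (‖a‖ * ‖n‖ + ⟪a, n⟫) := by
    rw [hw, inner_add_right, inner_smul_right, inner_smul_right, real_inner_self_eq_norm_sq]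
    ring
  have hnw : ⟪n, w⟫ = ‖n‖ * (‖a‖ * ‖n‖ + ⟪a, n⟫) := by
    rw [hw, inner_add_right, inner_smul_right, inner_smul_right, real_inner_self_eq_norm_sq,
      real_inner_comm]
    ring
  have hww : ‖w‖ ^ 2 = ‖n‖ * ⟪a, w⟫ + ‖a‖ * ⟪n, w⟫ := by
    rw [← real_inner_self_eq_norm_sq]
    nth_rw 1 [hw]
    rw [inner_add_left, real_inner_smul_left, real_inner_smul_left]
  have hpos : 0 < 2 * (‖a‖ * ‖n‖) * (‖a‖ * ‖n‖ + ⟪a, n⟫) := by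
    have hwpos : 0 < ‖w‖ ^ 2 := by positivity
    rw [hww, haw, hnw] at hwpos
    linarith
  have hangle : 0 < ‖a‖ * ‖n‖ + ⟪a, n⟫ := pos_of_mul_pos_right hpos (by positivity)
  have ha : 0 < ‖a‖ := norm_pos_iff.2 fun ha ↦ by simp [ha] at hpos
  have hn : 0 < ‖n‖ := norm_pos_iff.2 fun hn ↦ by simp [hn] at hpos
  exact (h w (haw ▸ mul_pos ha hangle)).not_gt (hnw ▸ mul_pos hn hangle)

theorem apply_nonpos_of_ball_subset {C : Set V} {φ : V → ℝ} {φ' : V →L[ℝ] ℝ} {y z w : V}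
    (hφ : HasFDerivAt φ φ' z) (hz : φ z = 0) (hC : ∀ᶠ p in 𝓝 z, 0 < φ p → p ∉ C)
    (hball : ball y (dist z y) ⊆ C) (hw : 0 < ⟪y - z, w⟫) : φ' w ≤ 0 := by
  by_contra! hφ'w
  have hsq : HasFDerivAt (fun p ↦ -‖p - y‖ ^ 2) (-(2 • innerSL ℝ (z - y))) z :=
    ((hasFDerivAt_id z).sub_const y).norm_sq.neg
  have hsqw : 0 < (-(2 • innerSL ℝ (z - y))) w := by
    have : ⟪z - y, w⟫ < 0 := by rwa [← neg_sub, inner_neg_left, neg_neg_iff_pos]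
    change 0 < -(2 • ⟪z - y, w⟫)
    rw [two_nsmul]
    linarith
  have hline : Tendsto (fun t : ℝ ↦ z + t • w) (𝓝[>] 0) (𝓝 z) :=
    (Continuous.tendsto' (by fun_prop) _ _ (by simp)).mono_left nhdsWithin_le_nhds
  obtain ⟨t, htφ, htsq, htC⟩ := ((eventually_lt_of_hasFDerivAt_pos hφ hφ'w).and
    ((eventually_lt_of_hasFDerivAt_pos hsq hsqw).and (hline.eventually hC))).exists
  refine htC (hz ▸ htφ) (hball ?_)
  rw [mem_ball, dist_eq_norm, dist_eq_norm]
  exact lt_of_pow_lt_pow_left₀ 2 (norm_nonneg _) (neg_lt_neg_iff.1 htsq)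

theorem metricProj_eq_singleton_of_side [ProperSpace V] {E : Set V} {φ : V → ℝ} {φ' : V →L[ℝ] ℝ}
    {z : V} (hE : E.Nonempty) (hφ : HasFDerivAt φ φ' z) (hφ' : φ' ≠ 0) (hz : φ z = 0)
    (hside : ∀ᶠ p in 𝓝 z, 0 < φ p → p ∉ cthickening (infDist z E) E) :
    ∃ y, metricProj E z = {y} := by
  set n := (InnerProductSpace.toDual ℝ V).symm φ' with hn
  have hn0 : ‖n‖ ≠ 0 := by simpa [hn] using hφ'
  have hdirection : ∀ y ∈ metricProj E z, ‖n‖ • (y - z) = -(infDist z E • n) := by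
    intro y hy
    have hball : ball y (dist z y) ⊆ cthickening (infDist z E) E := by
      rw [hy.2, ← cthickening_closure]
      exact ball_subset_closedBall.trans (closedBall_subset_cthickening hy.1 _)
    rw [← hy.2, dist_eq_norm', norm_smul_eq_neg_norm_smul]
    intro w hw
    rw [hn, InnerProductSpace.toDual_symm_apply]
    exact apply_nonpos_of_ball_subset hφ hz hside hball hw
  obtain ⟨y, hy⟩ := metricProj_nonempty hE z
  refine ⟨y, eq_singleton_iff_unique_mem.2 ⟨hy, fun y' hy' ↦ ?_⟩⟩
  have heq := (hdirection y' hy').trans (hdirection y hy).symm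
  exact sub_left_injective (smul_right_injective V hn0 heq)

end Tangency

section PlanarThickening

variable {V : Type*} [NormedAddCommGroup V] [InnerProductSpace ℝ V] {E : Set V} {ε δ : ℝ} {x z : V}

theorem exists_metricProj_eq_singleton_of_isC1Arc (hV : Module.finrank ℝ V = 2) (hε : 0 ≤ ε)
    (harc : IsC1Arc (frontier (cthickening ε E) ∩ closedBall x δ))
    (hz : z ∈ frontier (cthickening ε E)) (hzx : z ∈ ball x δ) : ∃ y, metricProj E z = {y} := by
  have : FiniteDimensional ℝ V := Module.finite_of_finrank_eq_succ hV
  have : ProperSpace V := FiniteDimensional.proper ℝ V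
  have hE : E.Nonempty := by
    by_contra! hempty
    simp [hempty] at hz
  obtain ⟨H, h', hzH, hH, hA⟩ := harc.exists_straightening hV ⟨hz, ball_subset_closedBall hzx⟩
  have hfrontier : ∀ᶠ p in 𝓝 z, p ∈ frontier (cthickening ε E) → (H p).2 = 0 := by
    filter_upwards [hA, isOpen_ball.mem_nhds hzx] with p hp hpx hpC
    exact hp ⟨hpC, ball_subset_closedBall hpx⟩
  obtain ⟨c, hc, hside⟩ := exists_eventually_notMem_of_pos isClosed_cthickening hz hzH hfrontier
  have hφ : HasFDerivAt (fun p ↦ c * (H p).2)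
      (c • (ContinuousLinearMap.snd ℝ ℝ ℝ).comp (h' : V →L[ℝ] ℝ × ℝ)) z :=
    hH.hasFDerivAt.snd.const_mul c
  have hφ' : c • (ContinuousLinearMap.snd ℝ ℝ ℝ).comp (h' : V →L[ℝ] ℝ × ℝ) ≠ 0 := fun h ↦ by
    simpa [hc] using DFunLike.congr_fun h (h'.symm (0, 1))
  refine metricProj_eq_singleton_of_side hE hφ hφ' ?_ ?_
  · rw [hfrontier.self_of_nhds hz, mul_zero]
  · rwa [infDist_eq_of_mem_frontier_cthickening hε hz]

theorem eventually_exists_metricProj_eq_singleton_iff (hV : Module.finrank ℝ V = 2) (hε : 0 < ε)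
    (hx : x ∈ frontier (cthickening ε E)) :
    (∀ᶠ z in 𝓝 x, z ∈ frontier (cthickening ε E) → ∃ y, metricProj E z = {y}) ↔
      ∃ δ > 0, IsC1Arc (frontier (cthickening ε E) ∩ closedBall x δ) := by
  have : FiniteDimensional ℝ V := Module.finite_of_finrank_eq_succ hV
  have : ProperSpace V := FiniteDimensional.proper ℝ V
  constructor
  · intro huniq
    obtain ⟨δ, harc, hδ⟩ := ((eventually_isC1Arc_frontier_cthickening hV hε hx huniq).and
      self_mem_nhdsWithin).exists
    exact ⟨δ, hδ, harc⟩
  · rintro ⟨δ, hδ, harc⟩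
    filter_upwards [ball_mem_nhds x hδ] with z hzx hz
    exact exists_metricProj_eq_singleton_of_isC1Arc hV hε.le harc hz hzx

end PlanarThickening

section Contributors

variable {E : Set Plane} {ε : ℝ} {x : Plane}

theorem eNbhd_eq_cthickening (hε : 0 < ε) : eNbhd E ε = cthickening ε E := by
  rw [eNbhd, ← thickening_eq_biUnion_ball, closure_thickening hε]

theorem contributors_eq_metricProj (hε : 0 < ε) (hx : x ∈ frontier (eNbhd E ε)) :
    contributors E ε x = metricProj E x := by
  rw [eNbhd_eq_cthickening hε] at hx
  have hdist := infDist_eq_of_mem_frontier_cthickening hε.le hx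
  ext y
  rw [contributors, mem_ofPred_eq, ← dist_eq_norm']
  refine ⟨fun ⟨hyE, hy⟩ ↦ ⟨frontier_subset_closure hyE, hy.trans hdist.symm⟩, fun hy ↦
    ⟨metricProj_subset_frontier (hdist ▸ hε) hy, hy.2.trans hdist⟩⟩

theorem mem_unp_iff (hε : 0 < ε) :
    x ∈ unp E ε ↔ x ∈ frontier (eNbhd E ε) ∧ ∃ y, metricProj E x = {y} :=
  and_congr_right fun hx ↦ by rw [contributors_eq_metricProj hε hx]

theorem isSmoothPt_iff_eventually (hε : 0 < ε) (hx : x ∈ frontier (eNbhd E ε)) :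
    IsSmoothPt E ε x ↔
      ∀ᶠ z in 𝓝 x, z ∈ frontier (eNbhd E ε) → ∃ y, metricProj E z = {y} := by
  rw [IsSmoothPt, Metric.eventually_nhds_iff_ball]
  constructor
  · rintro ⟨-, r, hr, hunp⟩
    exact ⟨r, hr, fun z hz hzE ↦ ((mem_unp_iff hε).1 (hunp ⟨hzE, hz⟩)).2⟩
  · rintro ⟨r, hr, huniq⟩
    have hunp : frontier (eNbhd E ε) ∩ ball x r ⊆ unp E ε := fun z hz ↦
      (mem_unp_iff hε).2 ⟨hz.1, huniq z hz.2 hz.1⟩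
    exact ⟨hunp ⟨hx, mem_ball_self hr⟩, r, hr, hunp⟩

end Contributors

theorem characterisation_of_smooth_points_general (E : Set Plane) {ε : ℝ} (hε : 0 < ε) (x : Plane)
    (hx : x ∈ frontier (eNbhd E ε)) :
    IsSmoothPt E ε x ↔ ∃ δ > 0, IsC1Arc (frontier (eNbhd E ε) ∩ closedBall x δ) := by
  rw [isSmoothPt_iff_eventually hε hx]
  rw [eNbhd_eq_cthickening hε] at hx ⊢
  exact eventually_exists_metricProj_eq_singleton_iff finrank_euclideanSpace_fin hε hx

/-- Characterisation of smooth points: a boundary point is smooth if and only if near it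
the boundary of `E_ε` is a simple `C¹`-curve (with nowhere-vanishing derivative). -/
theorem characterisation_of_smooth_points (E : Set Plane) (hE : IsCompact E) {ε : ℝ}
    (hε : 0 < ε) (x : Plane) (hx : x ∈ frontier (eNbhd E ε)) :
    IsSmoothPt E ε x ↔
      ∃ δ > 0, ∃ γ : ℝ → Plane,
        InjOn γ (Icc 0 1) ∧ ContDiffOn ℝ 1 γ (Icc 0 1) ∧
        (∀ t ∈ Icc (0 : ℝ) 1, derivWithin γ (Icc 0 1) t ≠ 0) ∧
        γ '' Icc 0 1 = frontier (eNbhd E ε) ∩ closedBall x δ :=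
  characterisation_of_smooth_points_general E hε x hx

end
end

section
/- Let E ⊆ ℝ² be compact, ε > 0, and let (x_n) be a sequence of pairwise distinct singularities on ∂E_ε with x_n → x for some x ∈ ∂E_ε. Writing Ξ_ext(x_n) = {ξ_n^{(1)}, ξ_n^{(2)}} for each n (allowing ξ_n^{(1)} = ξ_n^{(2)}), we have |⟨ξ_n^{(1)}, ξ_n^{(2)}⟩| → 1 as n → ∞. -/
open Metric Set Filter Topology RealInnerProductSpace

noncomputable section

/-!
Let `η = (u - x) / ‖u - x‖` be the direction in which `u` is seen from its limit `x`. Points of `E`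
stay at distance at least `ε` from both `u` and `x`. Hence a contributor `y` of `u` is no closer to
`x` than to `u`, which gives `⟪y - u, η⟫ ≥ -‖u - x‖ / 2`. By compactness `y` is near some `w` at
distance `ε` from `x` and no closer to `u` than to `x`, so `⟪w - x, η⟫ ≤ ‖u - x‖ / 2`. Together,
`⟪y - u, η⟫ → 0`. An extremal direction `ξ` at `u` is orthogonal to such a `y - u`, and in the plane
this forces `|⟪ξ, η⟫| → 1`. All extremal directions at `u` are thus asymptotically parallel to `η`.
-/

open NormedSpace (normalize norm_smul_normalize normalize_neg norm_normalize_eq_one_iff)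
open scoped EuclideanSpace

section InnerProductSpace

variable {V : Type*} [NormedAddCommGroup V] [InnerProductSpace ℝ V]

lemma neg_norm_div_two_le_inner_normalize {a d : V} (h : ‖a‖ ≤ ‖a + d‖) :
    -(‖d‖ / 2) ≤ ⟪a, normalize d⟫ := by
  rcases eq_or_ne d 0 with rfl | hd
  · simp
  have hinner : ⟪a, d⟫ = ‖d‖ * ⟪a, normalize d⟫ := by
    rw [← real_inner_smul_right, norm_smul_normalize]
  have hsq : ‖a‖ ^ 2 ≤ ‖a + d‖ ^ 2 := by gcongr
  rw [norm_add_sq_real, hinner] at hsq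
  refine le_of_mul_le_mul_left ?_ (norm_pos_iff.mpr hd)
  linarith

lemma tendsto_inner_sub_normalize_sub {ι : Type*} {l : Filter ι} {u y : ι → V} {x w : V}
    (hu : Tendsto u l (𝓝 x)) (hy : Tendsto y l (𝓝 w))
    (hyx : ∀ᶠ i in l, ‖y i - u i‖ ≤ ‖y i - x‖) (hwu : ∀ᶠ i in l, ‖w - x‖ ≤ ‖w - u i‖) :
    Tendsto (fun i => ⟪y i - u i, normalize (u i - x)⟫) l (𝓝 0) := by
  have hdist : Tendsto (fun i => ‖u i - x‖ / 2) l (𝓝 0) := by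
    simpa using (tendsto_iff_norm_sub_tendsto_zero.mp hu).div_const 2
  have hdiff : Tendsto (fun i => ‖(y i - u i) - (w - x)‖) l (𝓝 0) :=
    tendsto_iff_norm_sub_tendsto_zero.mp (hy.sub hu)
  refine tendsto_of_tendsto_of_tendsto_of_le_of_le' (by simpa using hdist.neg)
    (by simpa using hdist.add hdiff) ?_ ?_
  · filter_upwards [hyx] with i hi
    exact neg_norm_div_two_le_inner_normalize (by simpa using hi)
  · filter_upwards [hwu] with i hi
    have hlimit : ⟪w - x, normalize (u i - x)⟫ ≤ ‖u i - x‖ / 2 := by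
      have := neg_norm_div_two_le_inner_normalize (a := w - x) (d := x - u i) (by simpa using hi)
      rwa [← neg_sub (u i) x, normalize_neg, inner_neg_right, norm_neg, neg_le_neg_iff] at this
    have herror : ⟪(y i - u i) - (w - x), normalize (u i - x)⟫ ≤ ‖(y i - u i) - (w - x)‖ := by
      refine (real_inner_le_norm _ _).trans (mul_le_of_le_one_right (norm_nonneg _) ?_)
      rcases eq_or_ne (u i - x) 0 with h | h
      · simp [h]
      · exact (norm_normalize_eq_one_iff.mpr h).le
    calc ⟪y i - u i, normalize (u i - x)⟫
        = ⟪w - x, normalize (u i - x)⟫ + ⟪(y i - u i) - (w - x), normalize (u i - x)⟫ := by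
          rw [← inner_add_left, add_sub_cancel]
      _ ≤ ‖u i - x‖ / 2 + ‖(y i - u i) - (w - x)‖ := add_le_add hlimit herror

lemma norm_sq_mul_inner_sq_add_of_inner_eq_zero [Fact (Module.finrank ℝ V = 2)] {a ξ : V}
    (haξ : ⟪a, ξ⟫ = 0) (η : V) :
    ‖ξ‖ ^ 2 * ⟪a, η⟫ ^ 2 + ‖a‖ ^ 2 * ⟪ξ, η⟫ ^ 2 = ‖a‖ ^ 2 * ‖ξ‖ ^ 2 * ‖η‖ ^ 2 := by
  rcases eq_or_ne ξ 0 with rfl | hξ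
  · simp
  have : FiniteDimensional ℝ V := .of_fact_finrank_eq_two
  let o : Orientation ℝ V (Fin 2) :=
    ((stdOrthonormalBasis ℝ V).reindex (finCongr Fact.out)).toBasis.orientation
  have hprod : o.areaForm ξ a * o.areaForm ξ η = ‖ξ‖ ^ 2 * ⟪a, η⟫ := by
    simpa [real_inner_comm, haξ] using o.inner_mul_inner_add_areaForm_mul_areaForm ξ a η
  have hξa : o.areaForm ξ a ^ 2 = ‖ξ‖ ^ 2 * ‖a‖ ^ 2 := by
    simpa [real_inner_comm, haξ] using o.inner_sq_add_areaForm_sq ξ a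
  have hξη : ⟪ξ, η⟫ ^ 2 + o.areaForm ξ η ^ 2 = ‖ξ‖ ^ 2 * ‖η‖ ^ 2 :=
    o.inner_sq_add_areaForm_sq ξ η
  refine mul_left_cancel₀ (pow_ne_zero 2 (norm_ne_zero_iff.mpr hξ)) ?_
  linear_combination -(o.areaForm ξ a * o.areaForm ξ η + ‖ξ‖ ^ 2 * ⟪a, η⟫) * hprod +
    o.areaForm ξ η ^ 2 * hξa + ‖ξ‖ ^ 2 * ‖a‖ ^ 2 * hξη

lemma inner_sub_inner_smul_sub_inner_smul (ξ₁ ξ₂ : V) {η : V} (hη : ‖η‖ = 1) :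
    ⟪ξ₁ - ⟪ξ₁, η⟫ • η, ξ₂ - ⟪ξ₂, η⟫ • η⟫ = ⟪ξ₁, ξ₂⟫ - ⟪ξ₁, η⟫ * ⟪ξ₂, η⟫ := by
  simp only [inner_sub_left, inner_sub_right, real_inner_smul_left, real_inner_smul_right,
    real_inner_self_eq_norm_sq, hη, real_inner_comm ξ₂ η]
  ring

lemma tendsto_sub_inner_smul_of_tendsto_abs_inner {ι : Type*} {l : Filter ι} {ξ η : ι → V}
    (hξ : ∀ᶠ i in l, ‖ξ i‖ = 1) (hη : ∀ᶠ i in l, ‖η i‖ = 1)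
    (hlim : Tendsto (fun i => |⟪ξ i, η i⟫|) l (𝓝 1)) :
    Tendsto (fun i => ξ i - ⟪ξ i, η i⟫ • η i) l (𝓝 0) := by
  have hsqrt : Tendsto (fun i => √(1 - |⟪ξ i, η i⟫| ^ 2)) l (𝓝 0) := by
    simpa using ((hlim.pow 2).const_sub 1).sqrt
  refine tendsto_zero_iff_norm_tendsto_zero.mpr (hsqrt.congr' ?_)
  filter_upwards [hξ, hη] with i hξi hηi
  rw [norm_eq_sqrt_real_inner, inner_sub_inner_smul_sub_inner_smul _ _ hηi,
    real_inner_self_eq_norm_sq, hξi, sq_abs, one_pow, sq]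

lemma tendsto_abs_inner_of_tendsto_abs_inner {ι : Type*} {l : Filter ι} {ξ₁ ξ₂ η : ι → V}
    (hξ₁ : ∀ᶠ i in l, ‖ξ₁ i‖ = 1) (hξ₂ : ∀ᶠ i in l, ‖ξ₂ i‖ = 1) (hη : ∀ᶠ i in l, ‖η i‖ = 1)
    (hlim₁ : Tendsto (fun i => |⟪ξ₁ i, η i⟫|) l (𝓝 1))
    (hlim₂ : Tendsto (fun i => |⟪ξ₂ i, η i⟫|) l (𝓝 1)) :
    Tendsto (fun i => |⟪ξ₁ i, ξ₂ i⟫|) l (𝓝 1) := by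
  have hproj : Tendsto (fun i => |⟪ξ₁ i, η i⟫ * ⟪ξ₂ i, η i⟫|) l (𝓝 1) := by
    simpa only [abs_mul, mul_one] using hlim₁.mul hlim₂
  have hperp : Tendsto (fun i => ⟪ξ₁ i, ξ₂ i⟫ - ⟪ξ₁ i, η i⟫ * ⟪ξ₂ i, η i⟫) l (𝓝 0) := by
    have h := (tendsto_sub_inner_smul_of_tendsto_abs_inner hξ₁ hη hlim₁).inner (𝕜 := ℝ)
      (tendsto_sub_inner_smul_of_tendsto_abs_inner hξ₂ hη hlim₂)
    rw [inner_zero_left] at h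
    exact h.congr' (hη.mono fun i hi => inner_sub_inner_smul_sub_inner_smul _ _ hi)
  refine hproj.congr_dist (squeeze_zero (fun _ => dist_nonneg) (fun i => ?_)
    (tendsto_zero_iff_abs_tendsto_zero _ |>.mp hperp))
  rw [dist_comm, Real.dist_eq]
  exact abs_abs_sub_abs_le _ _

end InnerProductSpace

lemma le_norm_sub_of_mem_closure {E : Set Plane} {ε : ℝ} {y z : Plane}
    (hz : z ∉ interior (eNbhd E ε)) (hy : y ∈ closure E) : ε ≤ ‖y - z‖ := by
  have hclosed : IsClosed {w : Plane | ε ≤ ‖w - z‖} := isClosed_le (by fun_prop) (by fun_prop)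
  refine closure_minimal (fun w hw => show ε ≤ ‖w - z‖ from ?_) hclosed hy
  refine le_of_not_gt fun hlt => hz ?_
  have hball : ball w ε ⊆ eNbhd E ε :=
    (subset_biUnion_of_mem (u := fun y => ball y ε) hw).trans subset_closure
  exact interior_maximal hball isOpen_ball (by rwa [mem_ball', dist_eq_norm])

lemma notMem_interior_eNbhd_of_mem_outwardDirs {E : Set Plane} {ε : ℝ} {z ξ : Plane}
    (hξ : ξ ∈ outwardDirs E ε z) : z ∉ interior (eNbhd E ε) := by
  obtain ⟨-, v, hv, hvz, -⟩ := hξ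
  exact (closure_compl (s := eNbhd E ε)).subset
    (mem_closure_of_tendsto hvz (Eventually.of_forall hv))

lemma tendsto_inner_contributor_sub_normalize_sub {E : Set Plane} {ε : ℝ} {x : Plane}
    {ι : Type*} {l : Filter ι} {u y : ι → Plane}
    (hint : ∀ᶠ i in l, u i ∉ interior (eNbhd E ε)) (hu : Tendsto u l (𝓝 x))
    (hy : ∀ᶠ i in l, y i ∈ contributors E ε (u i)) :
    Tendsto (fun i => ⟪y i - u i, normalize (u i - x)⟫) l (𝓝 0) := by
  refine tendsto_iff_ultrafilter _ _ _ |>.mpr fun g hg => ?_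
  replace hint := hint.filter_mono hg
  replace hu := hu.mono_left hg
  replace hy := hy.filter_mono hg
  have hx : x ∉ interior (eNbhd E ε) := isOpen_interior.isClosed_compl.mem_of_tendsto hu hint
  have hbdd : ∀ᶠ i in g, y i ∈ closedBall x (ε + 1) := by
    filter_upwards [hy, hu.eventually (closedBall_mem_nhds x one_pos)] with i hi hui
    rw [mem_closedBall]
    exact (dist_triangle _ (u i) _).trans (add_le_add (by rw [dist_eq_norm, hi.2]) hui)
  obtain ⟨w, -, hw : Tendsto y g (𝓝 w)⟩ :=
    (isCompact_closedBall x (ε + 1)).ultrafilter_le_nhds (g.map y) (le_principal_iff.mpr hbdd)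
  have hclosure : ∀ᶠ i in g, y i ∈ closure E := hy.mono fun i hi => frontier_subset_closure hi.1
  have hwE : w ∈ closure E := isClosed_closure.mem_of_tendsto hw hclosure
  have hwx : ‖w - x‖ = ε :=
    tendsto_nhds_unique_of_eventuallyEq (hw.sub hu).norm tendsto_const_nhds
      (hy.mono fun i hi => hi.2)
  refine tendsto_inner_sub_normalize_sub hu hw ?_ ?_
  · filter_upwards [hy, hclosure] with i hi hiE
    exact hi.2.trans_le (le_norm_sub_of_mem_closure hx hiE)
  · filter_upwards [hint] with i hi
    exact hwx.trans_le (le_norm_sub_of_mem_closure hi hwE)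

lemma tendsto_abs_inner_extOutward_normalize_sub {E : Set Plane} {ε : ℝ} (hε : 0 < ε) {x : Plane}
    {ι : Type*} {l : Filter ι} {u ξ : ι → Plane} (hu : Tendsto u l (𝓝[≠] x))
    (hξ : ∀ᶠ i in l, ξ i ∈ extOutward E ε (u i)) :
    Tendsto (fun i => |⟪ξ i, normalize (u i - x)⟫|) l (𝓝 1) := by
  obtain ⟨hux, hne⟩ := tendsto_nhdsWithin_iff.mp hu
  obtain ⟨y, hy⟩ := skolem.mp (hξ.mono fun i hi => hi.2)
  have hlim : Tendsto (fun i => ⟪y i - u i, normalize (u i - x)⟫) l (𝓝 0) :=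
    tendsto_inner_contributor_sub_normalize_sub
      (hξ.mono fun i hi => notMem_interior_eNbhd_of_mem_outwardDirs hi.1) hux
      (hy.mono fun i hi => hi.1)
  have hsqrt : Tendsto (fun i => √(1 - ⟪y i - u i, normalize (u i - x)⟫ ^ 2 / ε ^ 2)) l (𝓝 1) := by
    simpa using (((hlim.pow 2).div_const (ε ^ 2)).const_sub 1).sqrt
  refine hsqrt.congr' ?_
  filter_upwards [hξ, hy, hne] with i hξi hyi hnei
  have hpyth := norm_sq_mul_inner_sq_add_of_inner_eq_zero hyi.2 (normalize (u i - x))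
  rw [hyi.1.2, hξi.1.1, norm_normalize_eq_one_iff.mpr (sub_ne_zero.mpr hnei)] at hpyth
  rw [← Real.sqrt_sq_eq_abs]
  congr 1
  field_simp
  linarith

theorem geometry_of_accumulating_singularities_general {E : Set Plane} {ε : ℝ} (hε : 0 < ε)
    {x : Plane} {ι : Type*} {l : Filter ι} {u ξ₁ ξ₂ : ι → Plane}
    (hu : Tendsto u l (𝓝[≠] x))
    (hξ₁ : ∀ᶠ i in l, ξ₁ i ∈ extOutward E ε (u i))
    (hξ₂ : ∀ᶠ i in l, ξ₂ i ∈ extOutward E ε (u i)) :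
    Tendsto (fun i => |⟪ξ₁ i, ξ₂ i⟫|) l (𝓝 1) := by
  have hne : ∀ᶠ i in l, u i ≠ x := (tendsto_nhdsWithin_iff.mp hu).2
  exact tendsto_abs_inner_of_tendsto_abs_inner
    (hξ₁.mono fun i hi => hi.1.1) (hξ₂.mono fun i hi => hi.1.1)
    (hne.mono fun i hi => norm_normalize_eq_one_iff.mpr (sub_ne_zero.mpr hi))
    (tendsto_abs_inner_extOutward_normalize_sub hε hu hξ₁)
    (tendsto_abs_inner_extOutward_normalize_sub hε hu hξ₂)

/-- Geometry of accumulating singularities: along a sequence of pairwise distinct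
singularities converging to a boundary point, the extremal outward directions become
increasingly aligned or opposed. -/
theorem geometry_of_accumulating_singularities (E : Set Plane) (hE : IsCompact E)
    {ε : ℝ} (hε : 0 < ε) (x : Plane) (hx : x ∈ frontier (eNbhd E ε)) (u : ℕ → Plane)
    (hinj : Function.Injective u) (hsing : ∀ n, IsSingularity E ε (u n))
    (hconv : Tendsto u atTop (nhds x)) (ξ1 ξ2 : ℕ → Plane)
    (hext : ∀ n, extOutward E ε (u n) = {ξ1 n, ξ2 n}) :
    Tendsto (fun n => |⟪ξ1 n, ξ2 n⟫|) atTop (nhds 1) := by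
  have hne : ∀ᶠ n in atTop, u n ≠ x :=
    Nat.cofinite_eq_atTop ▸ hinj.tendsto_cofinite.eventually (eventually_cofinite_ne x)
  exact geometry_of_accumulating_singularities_general hε (tendsto_nhdsWithin_iff.mpr ⟨hconv, hne⟩)
    (.of_forall fun n => (hext n).superset (mem_insert _ _))
    (.of_forall fun n => (hext n).superset (mem_insert_of_mem _ rfl))

end
end
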